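/- arXiv:2109.04099 — 8 statements merged into one kernel-verified Lean document; each statement's English description precedes it below -/
import Mathlib

section
/- Let F be a forest, v a vertex of F, and suppose the edges incident to v are pre-colored with at most two colors. Then this partial coloring extends to a 2-edge-coloring of all of F such that at every vertex w ≠ v, every color appearing at w appears an odd number of times at w. -/
open SimpleGraph Finset

variable {V : Type*} [Fintype V] [DecidableEq V]

/-- Number of edges incident to `v` receiving color `i` under the edge-coloring `f`. -/
def colorCount (G : SimpleGraph V) [DecidableRel G.Adj] {k : ℕ}
    (f : Sym2 V → Fin k) (v : V) (i : Fin k) : ℕ :=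
  ((G.incidenceFinset v).filter (fun e => f e = i)).card

/-- The edge-coloring `f` is odd at the vertex `v`: every color appearing at `v`
appears an odd number of times at `v`. -/
def OddAt (G : SimpleGraph V) [DecidableRel G.Adj] {k : ℕ}
    (f : Sym2 V → Fin k) (v : V) : Prop :=
  ∀ i : Fin k, colorCount G f v i = 0 ∨ Odd (colorCount G f v i)

/-- An odd edge-coloring: odd at every vertex. -/
def IsOddColoring (G : SimpleGraph V) [DecidableRel G.Adj] {k : ℕ}
    (f : Sym2 V → Fin k) : Prop :=
  ∀ v : V, OddAt G f v

/-- The odd chromatic index: least `k` admitting an odd `k`-edge-coloring. -/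
noncomputable def oddChromIndex (G : SimpleGraph V) [DecidableRel G.Adj] : ℕ :=
  sInf {k | ∃ f : Sym2 V → Fin k, IsOddColoring G f}

theorem exists_leaf_ne {W : Type*} [Finite W] [Nontrivial W] (H : SimpleGraph W)
    (hH : H.IsAcyclic) (v : W) :
    ∃ w, w ≠ v ∧ ∀ x y, H.Adj w x → H.Adj w y → x = y := by
  obtain ⟨a, b, p, hp, hmax⟩ := Walk.exists_isPath_forall_isPath_length_le_length H
  have key : ∀ (a b : W) (q : H.Walk a b), q.IsPath → q.length = p.length →
      ∀ x, H.Adj a x → x = q.snd := by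
    intro a b q hq hl x hx
    by_cases hs : x ∈ q.support
    · exact hH.eq_snd_of_adj_start hq hx hs
    · have h1 := hmax _ _ (Walk.cons hx.symm q) (hq.cons hs)
      simp at h1
      omega
  by_cases ha : a = v
  · by_cases hb : b = v
    · subst ha
      subst hb
      have hl : p.length = 0 := by
        simp [Walk.isPath_iff_eq_nil.mp hp]
      obtain ⟨w, hw⟩ := exists_ne b
      refine ⟨w, hw, fun x y hx _ => ?_⟩
      have h1 := hmax _ _ (Walk.cons hx Walk.nil) (by simp [hx.ne])
      simp at h1
      omega
    · refine ⟨b, hb, fun x y hx hy => ?_⟩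
      rw [key _ _ p.reverse hp.reverse (by simp) x hx, key _ _ p.reverse hp.reverse (by simp) y hy]
  · exact ⟨a, ha, fun x y hx hy => by rw [key _ _ p hp rfl x hx, key _ _ p hp rfl y hy]⟩

theorem local_recolor {α : Type*} [DecidableEq α] (E : Finset α) (f : α → Fin 2) (P : α → Prop)
    (hP : ∀ a ∈ E, ∀ b ∈ E, P a → P b → a = b) :
    ∃ f' : α → Fin 2, (∀ e, P e ∨ e ∉ E → f' e = f e) ∧
      ∀ i, (E.filter (fun e => f' e = i)).card = 0 ∨ Odd (E.filter (fun e => f' e = i)).card := by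
  rcases E.eq_empty_or_nonempty with rfl | hne
  · exact ⟨f, by simp, by simp⟩
  obtain ⟨a, haE, ha⟩ : ∃ a ∈ E, ∀ b ∈ E, P b → b = a := by
    by_cases h : ∃ a ∈ E, P a
    · obtain ⟨a, h1, h2⟩ := h
      exact ⟨a, h1, fun b hb hb' => hP b hb a h1 hb' h2⟩
    · obtain ⟨a, h1⟩ := hne
      exact ⟨a, h1, fun b hb hb' => (h ⟨b, hb, hb'⟩).elim⟩
  rcases Nat.even_or_odd E.card with hE | hE
  · obtain ⟨d, hd1, hd2⟩ : ∃ d : Fin 2, d ≠ f a ∧ ∀ i, i ≠ f a → d = i := by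
      generalize f a = c
      revert c
      decide
    refine ⟨fun e => if e ∈ E then (if e = a then f a else d) else f e, ?_, ?_⟩
    · intro e he
      grind
    · intro i
      right
      by_cases hi : i = f a
      · have : E.filter (fun e => (if e ∈ E then (if e = a then f a else d) else f e) = i)
            = {a} := by
          ext e
          simp only [Finset.mem_filter, Finset.mem_singleton]
          grind
        rw [this]; simp
      · have h2 : d = i := hd2 i hi
        have : E.filter (fun e => (if e ∈ E then (if e = a then f a else d) else f e) = i)
            = E.erase a := by
          ext e
          simp only [Finset.mem_filter, Finset.mem_erase]
          grind
        rw [this, Finset.card_erase_of_mem haE]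
        have : 0 < E.card := Finset.card_pos.mpr hne
        exact Nat.Even.sub_odd this hE odd_one
  · refine ⟨fun e => if e ∈ E then f a else f e, ?_, ?_⟩
    · intro e he
      grind
    · intro i
      by_cases hi : i = f a
      · right
        rwa [Finset.filter_true_of_mem]
        intro e he
        simp [he, hi]
      · left
        rw [Finset.card_eq_zero, Finset.filter_eq_empty_iff]
        intro e he
        simp [he, Ne.symm hi]

theorem extend_on (G : SimpleGraph V) [DecidableRel G.Adj]
    (hF : G.IsAcyclic) (v : V) (g : Sym2 V → Fin 2) (n : ℕ) :
    ∀ S : Finset V, S.card = n → v ∈ S →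
    ∃ f : Sym2 V → Fin 2, (∀ e ∈ G.incidenceSet v, f e = g e) ∧
      ∀ w ∈ S, w ≠ v → OddAt G f w := by
  induction n with
  | zero =>
    intro S hS hv
    simp_all
  | succ n ih =>
    intro S hS hv
    by_cases hnt : ∃ u ∈ S, u ≠ v
    · obtain ⟨u, hu, huv⟩ := hnt
      have : Nontrivial (S : Set V) := ⟨⟨u, hu⟩, ⟨v, hv⟩, by simpa using huv⟩
      obtain ⟨⟨w, hwS⟩, hwv, hw⟩ := exists_leaf_ne (G.induce (S : Set V)) (hF.induce _) ⟨v, hv⟩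
      have hwv' : w ≠ v := by simpa using hwv
      have hwS' : w ∈ S := hwS
      obtain ⟨f, hf1, hf2⟩ := ih (S.erase w) (by rw [Finset.card_erase_of_mem hwS', hS]; rfl)
        (Finset.mem_erase.mpr ⟨hwv'.symm, hv⟩)
      obtain ⟨f', h1, h2⟩ := local_recolor (G.incidenceFinset w) f
        (fun e => ∃ x ∈ S, x ≠ w ∧ x ∈ e) (by
          rintro a ha b hb ⟨x, hxS, hxw, hxa⟩ ⟨y, hyS, hyw, hyb⟩
          rw [mem_incidenceFinset] at ha hb
          have ea : a = s(w, x) := ((Sym2.mem_and_mem_iff hxw.symm).mp ⟨ha.2, hxa⟩)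
          have eb : b = s(w, y) := ((Sym2.mem_and_mem_iff hyw.symm).mp ⟨hb.2, hyb⟩)
          subst ea
          subst eb
          have := hw ⟨x, hxS⟩ ⟨y, hyS⟩ (by simpa using ha.1) (by simpa using hb.1)
          simp at this
          rw [this])
      have hkeep : ∀ z ∈ S, z ≠ w → ∀ e ∈ G.incidenceSet z, f' e = f e := by
        intro z hz hzw e he
        exact h1 e (Or.inl ⟨z, hz, hzw, he.2⟩)
      refine ⟨f', fun e he => ?_, fun z hz hzv => ?_⟩
      · rw [hkeep v hv hwv'.symm e he, hf1 e he]
      · by_cases hzw : z = w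
        · subst hzw
          exact h2
        · have h3 := hf2 z (Finset.mem_erase.mpr ⟨hzw, hz⟩) hzv
          intro i
          have : colorCount G f' z i = colorCount G f z i := by
            unfold colorCount
            congr 1
            apply Finset.filter_congr
            intro e he
            rw [hkeep z hz hzw e ((mem_incidenceFinset _ _ _).mp he)]
          rw [this]
          exact h3 i
    · exact ⟨g, fun _ _ => rfl, fun w hw hwv => (hnt ⟨w, hw, hwv⟩).elim⟩

theorem forest_local_coloring_extends (G : SimpleGraph V) [DecidableRel G.Adj]
    (hF : G.IsAcyclic) (v : V) (g : Sym2 V → Fin 2) :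
    ∃ f : Sym2 V → Fin 2, (∀ e ∈ G.incidenceSet v, f e = g e) ∧
      ∀ w : V, w ≠ v → OddAt G f w := by
  obtain ⟨f, h1, h2⟩ := extend_on G hF v g _ Finset.univ rfl (Finset.mem_univ v)
  exact ⟨f, h1, fun w hw => h2 w (Finset.mem_univ w) hw⟩
end

section
/- Every connected loopless graph G containing a bridge (i.e., with edge-connectivity 1) satisfies χ'_o(G) ≤ 3. -/
open SimpleGraph Finset

variable {V : Type*} [Fintype V] [DecidableEq V]

/-- Local pattern for two-colorings: if `¬ d` the set is monochromatic; if `d` and nonempty then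
exactly one element has a color different from all the others. -/
def GoodCol {E : Type*} (d : Prop) (I : Set E) (f : E → Bool) : Prop :=
  ∃ c : Bool, (¬ d → ∀ e ∈ I, f e = c) ∧
    (d → I.Nonempty → ∃ e0 ∈ I, f e0 = !c ∧ ∀ e ∈ I, e ≠ e0 → f e = c)

theorem GoodCol.congr {E : Type*} {d : Prop} {I : Set E} {f g : E → Bool}
    (h : GoodCol d I f) (hfg : ∀ e ∈ I, g e = f e) : GoodCol d I g := by
  obtain ⟨c, h1, h2⟩ := h
  refine ⟨c, fun hd e he => by rw [hfg e he, h1 hd e he], fun hd hI => ?_⟩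
  obtain ⟨e0, h0, h3, h4⟩ := h2 hd hI
  exact ⟨e0, h0, by rw [hfg e0 h0, h3], fun e he hne => by rw [hfg e he, h4 e he hne]⟩

theorem GoodCol.flip {E : Type*} {d : Prop} {I : Set E} {f : E → Bool}
    (h : GoodCol d I f) (t : Bool) : GoodCol d I (fun e => xor t (f e)) := by
  obtain ⟨c, h1, h2⟩ := h
  refine ⟨xor t c, fun hd e he => by simp only [h1 hd e he], fun hd hI => ?_⟩
  obtain ⟨e0, h0, h3, h4⟩ := h2 hd hI
  exact ⟨e0, h0, by simp only [h3]; cases t <;> cases c <;> rfl,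
    fun e he hne => by simp only [h4 e he hne]⟩

theorem GoodCol.insert {E : Type*} {d : Prop} {I : Set E} {f : E → Bool}
    (h : GoodCol d I f) (e : E) (he : e ∉ I) :
    ∃ a, ∀ g : E → Bool, (∀ x ∈ I, g x = f x) → g e = a → GoodCol d (Insert.insert e I) g := by
  obtain ⟨c, h1, h2⟩ := h
  by_cases hd : d
  · by_cases hI : I.Nonempty
    · obtain ⟨e0, h0, h3, h4⟩ := h2 hd hI
      refine ⟨c, fun g hg hge => ⟨c, fun h => absurd hd h, fun _ _ => ⟨e0, Or.inr h0, ?_, ?_⟩⟩⟩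
      · rw [hg e0 h0, h3]
      · rintro x (rfl | hx) hne
        · exact hge
        · rw [hg x hx, h4 x hx hne]
    · refine ⟨!c, fun g hg hge => ⟨c, fun h => absurd hd h, fun _ _ => ⟨e, Or.inl rfl, hge, ?_⟩⟩⟩
      rintro x (rfl | hx) hne
      · exact absurd rfl hne
      · exact absurd ⟨x, hx⟩ hI
  · refine ⟨c, fun g hg hge => ⟨c, fun _ => ?_, fun h => absurd h hd⟩⟩
    rintro x (rfl | hx)
    · exact hge
    · rw [hg x hx, h1 hd x hx]

theorem GoodCol.parity {E : Type*} [DecidableEq E] {d : Prop} {I : Finset E} {f : E → Bool}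
    (h : GoodCol d (I : Set E) f) (hd : d ↔ Even I.card) (b : Bool) :
    (I.filter (fun e => f e = b)).card = 0 ∨ Odd (I.filter (fun e => f e = b)).card := by
  obtain ⟨c, h1, h2⟩ := h
  by_cases hdd : d
  · rcases I.eq_empty_or_nonempty with rfl | hI
    · simp
    · obtain ⟨e0, h0, h3, h4⟩ := h2 hdd (by simpa using hI)
      have h0' : e0 ∈ I := by simpa using h0
      right
      by_cases hb : b = c
      · have : I.filter (fun e => f e = b) = I.erase e0 := by
          ext x
          simp only [Finset.mem_filter, Finset.mem_erase]
          constructor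
          · rintro ⟨hx, hfx⟩
            refine ⟨?_, hx⟩
            rintro rfl
            rw [h3, hb] at hfx
            cases c <;> simp at hfx
          · rintro ⟨hne, hx⟩
            exact ⟨hx, by rw [h4 x (by simpa using hx) hne, hb]⟩
        rw [this, Finset.card_erase_of_mem h0']
        have h5 := hd.1 hdd
        have h6 : 0 < I.card := Finset.card_pos.2 hI
        exact Nat.Even.sub_odd h6 h5 odd_one
      · have : I.filter (fun e => f e = b) = {e0} := by
          ext x
          simp only [Finset.mem_filter, Finset.mem_singleton]
          constructor
          · rintro ⟨hx, hfx⟩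
            by_contra hne
            exact hb (by rw [← hfx, h4 x (by simpa using hx) hne])
          · rintro rfl
            refine ⟨h0', ?_⟩
            rw [h3]
            revert hb
            cases c <;> cases b <;> simp
        rw [this]
        simp
  · have hodd : Odd I.card := by
      rw [← Nat.not_even_iff_odd, ← hd]
      exact hdd
    by_cases hb : b = c
    · right
      rwa [Finset.filter_true_of_mem]
      intro x hx
      rw [h1 hdd x (by simpa using hx), hb]
    · left
      rw [Finset.card_eq_zero, Finset.filter_eq_empty_iff]
      intro x hx hfx
      exact hb (by rw [← hfx, h1 hdd x (by simpa using hx)])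

theorem forest_good {W : Type*} [Finite W] (D : Set W) : ∀ (n : ℕ) (F : SimpleGraph W),
    F.IsAcyclic → F.edgeSet.ncard = n →
    ∃ f : Sym2 W → Bool, ∀ v, GoodCol (v ∈ D) (F.incidenceSet v) f := by
  classical
  intro n
  induction n with
  | zero =>
    intro F hF hn
    have hE : F.edgeSet = ∅ := by
      rwa [Set.ncard_eq_zero (Set.toFinite _)] at hn
    refine ⟨fun _ => true, fun v => ⟨true, fun _ _ _ => rfl, fun _ hI => ?_⟩⟩
    obtain ⟨e, he⟩ := hI
    have := F.incidenceSet_subset v he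
    rw [hE] at this
    exact absurd this (Set.notMem_empty _)
  | succ n ih =>
    intro F hF hn
    have hne : F.edgeSet.Nonempty := by
      apply Set.nonempty_of_ncard_ne_zero
      omega
    obtain ⟨e, he⟩ := hne
    induction e with | h u v =>
    have huv : F.Adj u v := he
    have hbr := isBridge_iff.1 (isAcyclic_iff_forall_isBridge.1 hF he)
    set F' := F.deleteEdges {s(u, v)} with hF'
    have hle : F' ≤ F := F.deleteEdges_le _
    have hn' : F'.edgeSet.ncard = n := by
      rw [hF', edgeSet_deleteEdges, Set.ncard_sdiff_singleton_of_mem he, hn]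
      rfl
    obtain ⟨f, hf⟩ := ih F' (hF.anti hle) hn'
    have hnot : ∀ w, s(u, v) ∉ F'.incidenceSet w := by
      intro w h
      have := h.1
      rw [hF', edgeSet_deleteEdges] at this
      exact this.2 rfl
    have hinc : ∀ w, w ≠ u → w ≠ v → F.incidenceSet w = F'.incidenceSet w := by
      intro w h1 h2
      ext x
      simp only [incidenceSet, hF', edgeSet_deleteEdges, Set.mem_ofPred_eq, Set.mem_sdiff,
        Set.mem_singleton_iff]
      constructor
      · rintro ⟨hx, hw⟩
        refine ⟨⟨hx, ?_⟩, hw⟩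
        rintro rfl
        simp [h1, h2] at hw
      · rintro ⟨⟨hx, _⟩, hw⟩
        exact ⟨hx, hw⟩
    have hins : ∀ w, w = u ∨ w = v → F.incidenceSet w = Insert.insert s(u, v) (F'.incidenceSet w) := by
      intro w h1
      ext x
      simp only [incidenceSet, hF', edgeSet_deleteEdges, Set.mem_ofPred_eq, Set.mem_sdiff,
        Set.mem_singleton_iff, Set.mem_insert_iff]
      constructor
      · rintro ⟨hx, hw⟩
        by_cases hxe : x = s(u, v)
        · exact Or.inl hxe
        · exact Or.inr ⟨⟨hx, hxe⟩, hw⟩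
      · rintro (rfl | ⟨⟨hx, _⟩, hw⟩)
        · exact ⟨he, by simpa using h1⟩
        · exact ⟨hx, hw⟩
    obtain ⟨a, ha⟩ := (hf u).insert s(u, v) (hnot u)
    obtain ⟨b, hb⟩ := (hf v).insert s(u, v) (hnot v)
    -- the final coloring
    let g : Sym2 W → Bool := fun x => if x = s(u, v) then a else
      if ∃ w ∈ x, F'.Reachable v w then xor (xor a b) (f x) else f x
    have hg0 : g s(u, v) = a := if_pos rfl
    have hg1 : ∀ w, ¬ F'.Reachable v w → ∀ x ∈ F'.incidenceSet w, g x = f x := by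
      intro w hw x hx
      have hne : x ≠ s(u, v) := fun h => hnot w (h ▸ hx)
      have : ¬ ∃ w ∈ x, F'.Reachable v w := by
        rintro ⟨y, hy, hr⟩
        by_cases hyw : y = w
        · exact hw (hyw ▸ hr)
        · have hx' : x = s(y, w) := (Sym2.mem_and_mem_iff hyw).1 ⟨hy, hx.2⟩
          have hadj : F'.Adj y w := by
            have := hx.1
            rwa [hx'] at this
          exact hw (hr.trans hadj.reachable)
      simp only [g, if_neg hne, if_neg this]
    have hg2 : ∀ w, F'.Reachable v w → ∀ x ∈ F'.incidenceSet w, g x = xor (xor a b) (f x) := by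
      intro w hw x hx
      have hne : x ≠ s(u, v) := fun h => hnot w (h ▸ hx)
      have : ∃ w ∈ x, F'.Reachable v w := ⟨w, hx.2, hw⟩
      simp only [g, if_neg hne, if_pos this]
    refine ⟨g, fun w => ?_⟩
    by_cases hwu : w = u
    · subst hwu
      rw [hins w (Or.inl rfl)]
      exact ha g (hg1 w (fun h => hbr h.symm)) hg0
    · by_cases hwv : w = v
      · subst hwv
        rw [hins w (Or.inr rfl)]
        have h1 := (hb (fun x => xor (xor a b) (g x)) (fun x hx => by
          rw [hg2 w (Reachable.refl _) x hx]
          cases a <;> cases b <;> simp) (by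
          rw [hg0]
          cases a <;> cases b <;> rfl)).flip (xor a b)
        refine h1.congr (fun x _ => ?_)
        cases a <;> cases b <;> simp
      · rw [hinc w hwu hwv]
        by_cases hr : F'.Reachable v w
        · exact ((hf w).flip (xor a b)).congr (hg2 w hr)
        · exact (hf w).congr (hg1 w hr)

theorem tjoin_single {W : Type*} [Fintype W] [DecidableEq W] (G : SimpleGraph W)
    [DecidableRel G.Adj] (T : SimpleGraph W) (hT : T ≤ G) (r v : W) (p : T.Walk v r) :
    ∃ x : Sym2 W → ZMod 2, (∀ e, e ∉ T.edgeSet → x e = 0) ∧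
      ∀ w, w ≠ r → ∑ e ∈ G.incidenceFinset w, x e = if w = v then 1 else 0 := by
  induction p with
  | nil => exact ⟨fun _ => 0, fun _ _ => rfl, fun w hw => by simp [hw]⟩
  | @cons a b r hab p ih =>
    obtain ⟨x, hx, hs⟩ := ih
    refine ⟨fun e => x e + if e = s(a, b) then 1 else 0, fun e he => ?_, fun w hw => ?_⟩
    · have : e ≠ s(a, b) := by
        rintro rfl
        exact he hab
      simp [this, hx e he]
    · rw [Finset.sum_add_distrib, hs w hw, Finset.sum_ite_eq']
      have hG : G.Adj a b := hT hab
      have hne : a ≠ b := hG.ne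
      have hm : s(a, b) ∈ G.incidenceFinset w ↔ w = a ∨ w = b := by
        rw [mem_incidenceFinset, mk'_mem_incidenceSet_iff]
        simp [hG]
      simp only [hm]
      by_cases h1 : w = a
      · subst h1
        simp [hne]
      · by_cases h2 : w = b
        · subst h2
          simp [h1]
          decide
        · simp [h1, h2]

theorem tjoin {W : Type*} [Fintype W] [DecidableEq W] (G : SimpleGraph W)
    [DecidableRel G.Adj] (T : SimpleGraph W) (hT : T ≤ G) (hc : T.Connected) (r : W)
    (X : W → ZMod 2) :
    ∃ x : Sym2 W → ZMod 2, (∀ e, e ∉ T.edgeSet → x e = 0) ∧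
      ∀ w, w ≠ r → ∑ e ∈ G.incidenceFinset w, x e = X w := by
  have h := fun v => tjoin_single G T hT r v (hc.preconnected v r).some
  choose x hx hs using h
  refine ⟨fun e => ∑ v, X v * x v e, fun e he => ?_, fun w hw => ?_⟩
  · exact Finset.sum_eq_zero (fun v _ => by rw [hx v e he, mul_zero])
  · rw [Finset.sum_comm]
    simp_rw [← Finset.mul_sum, fun v => hs v w hw]
    simp

theorem odd_except_one {W : Type*} [Fintype W] [DecidableEq W] (G : SimpleGraph W)
    [DecidableRel G.Adj] (hG : G.Connected) (z : W) :
    ∃ f : Sym2 W → Fin 3, ∀ w, w ≠ z → OddAt G f w := by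
  classical
  obtain ⟨T, hT, hTree⟩ := hG.exists_isTree_le
  let k : Sym2 W → ZMod 2 := fun e => if e ∈ T.edgeSet then 0 else 1
  obtain ⟨x, hx, hs⟩ := tjoin G T hT hTree.connected z
    (fun w => 1 + ∑ e ∈ G.incidenceFinset w, k e)
  let F : SimpleGraph W := T.deleteEdges {e | x e ≠ 0}
  have hFT : F ≤ T := T.deleteEdges_le _
  have hFac : F.IsAcyclic := hTree.isAcyclic.anti hFT
  obtain ⟨b, hb⟩ := forest_good {v | Even (F.incidenceFinset v).card} _ F hFac rfl
  let h : Sym2 W → ZMod 2 := fun e => k e + x e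
  have hF : ∀ e, e ∈ F.edgeSet ↔ h e = 0 := by
    intro e
    simp only [F, edgeSet_deleteEdges, Set.mem_sdiff, Set.mem_ofPred_eq, not_not, h, k]
    by_cases he : e ∈ T.edgeSet
    · simp [he]
    · simp [he, hx e he]
  have hFi : ∀ w, F.incidenceFinset w = (G.incidenceFinset w).filter (fun e => h e = 0) := by
    intro w
    ext e
    simp only [Finset.mem_filter, mem_incidenceFinset, incidenceSet, Set.mem_ofPred_eq, ← hF]
    constructor
    · rintro ⟨h1, h2⟩
      exact ⟨⟨edgeSet_mono (hFT.trans hT) h1, h2⟩, h1⟩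
    · rintro ⟨⟨_, h2⟩, h1⟩
      exact ⟨h1, h2⟩
  have hodd : ∀ w, w ≠ z → Odd ((G.incidenceFinset w).filter (fun e => ¬ h e = 0)).card := by
    intro w hw
    have h1 : ∑ e ∈ G.incidenceFinset w, h e = 1 := by
      simp only [h]
      rw [Finset.sum_add_distrib, hs w hw, add_comm, add_assoc, CharTwo.add_self_eq_zero, add_zero]
    have h2 : ∑ e ∈ G.incidenceFinset w, h e
        = (((G.incidenceFinset w).filter (fun e => ¬ h e = 0)).card : ZMod 2) := by
      rw [Finset.card_filter, Nat.cast_sum]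
      refine Finset.sum_congr rfl (fun e _ => ?_)
      generalize h e = y
      revert y
      decide
    rw [h2] at h1
    exact (ZMod.natCast_eq_one_iff_odd).1 h1
  refine ⟨fun e => if h e = 0 then (if b e = true then 1 else 2) else 0, fun w hw i => ?_⟩
  have hgood : GoodCol (Even (F.incidenceFinset w).card) (F.incidenceFinset w : Set (Sym2 W)) b := by
    have := hb w
    rwa [← coe_incidenceFinset] at this
  have hpar := hgood.parity Iff.rfl
  rw [hFi w] at hpar
  simp only [Finset.filter_filter] at hpar
  unfold colorCount
  have hcase : i = 0 ∨ i = 1 ∨ i = 2 := by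
    revert i
    decide
  rcases hcase with rfl | rfl | rfl
  · right
    convert hodd w hw using 5 with e
    by_cases h0 : h e = 0 <;> by_cases h1 : b e = true <;> simp [h0, h1]
  · convert hpar true using 4
    all_goals
      congr 1
      rename_i e _
      by_cases h0 : h e = 0 <;> by_cases h1 : b e = true <;> simp [h0, h1]
  · convert hpar false using 4
    all_goals
      congr 1
      rename_i e _
      by_cases h0 : h e = 0 <;> by_cases h1 : b e = true <;> simp [h0, h1]

theorem OddAt.congr' {W : Type*} [Fintype W] [DecidableEq W] {G : SimpleGraph W}
    [DecidableRel G.Adj] {k : ℕ} {f g : Sym2 W → Fin k} {v : W} (h : OddAt G f v)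
    (hfg : ∀ e ∈ G.incidenceSet v, g e = f e) : OddAt G g v := by
  intro i
  have : colorCount G g v i = colorCount G f v i := by
    unfold colorCount
    congr 1
    refine Finset.filter_congr (fun e he => ?_)
    rw [hfg e (by simpa using he)]
  rw [this]
  exact h i

theorem OddAt.perm {W : Type*} [Fintype W] [DecidableEq W] {G : SimpleGraph W}
    [DecidableRel G.Adj] {k : ℕ} {f : Sym2 W → Fin k} {v : W} (h : OddAt G f v)
    (σ : Equiv.Perm (Fin k)) : OddAt G (fun e => σ (f e)) v := by
  intro i
  have : colorCount G (fun e => σ (f e)) v i = colorCount G f v (σ.symm i) := by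
    unfold colorCount
    congr 1
    refine Finset.filter_congr (fun e he => ?_)
    exact (Equiv.eq_symm_apply σ).symm
  rw [this]
  exact h _

theorem bridge_oddChromIndex_le_three (G : SimpleGraph V) [DecidableRel G.Adj]
    (hG : G.Connected) (e : Sym2 V) (he : G.IsBridge e) :
    oddChromIndex G ≤ 3 := by
  classical
  induction e with | h u v =>
  have hbr := isBridge_iff.1 he
  apply Nat.sInf_le
  obtain ⟨fA0, hA0⟩ := odd_except_one G hG v
  obtain ⟨fB, hB⟩ := odd_except_one G hG u
  let σ : Equiv.Perm (Fin 3) := Equiv.swap (fA0 s(u, v)) (fB s(u, v))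
  obtain ⟨fA, hA, hAB⟩ : ∃ fA : Sym2 V → Fin 3, (∀ w, w ≠ v → OddAt G fA w) ∧
      fA s(u, v) = fB s(u, v) :=
    ⟨fun e => σ (fA0 e), fun w hw => (hA0 w hw).perm σ, Equiv.swap_apply_left _ _⟩
  set G' := G.deleteEdges {s(u, v)} with hG'
  refine ⟨fun x => if ∃ w ∈ x, G'.Reachable u w then fA x else fB x, fun w => ?_⟩
  by_cases hw : G'.Reachable u w
  · refine (hA w (fun h => hbr (h ▸ hw))).congr' (fun x hx => if_pos ⟨w, hx.2, hw⟩)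
  · have hwu : w ≠ u := by
      rintro rfl
      exact hw (Reachable.refl _)
    refine (hB w hwu).congr' (fun x hx => ?_)
    by_cases hxe : x = s(u, v)
    · subst hxe
      simp [hAB]
    · apply if_neg
      rintro ⟨y, hy, hr⟩
      by_cases hyw : y = w
      · exact hw (hyw ▸ hr)
      · have hx' : x = s(y, w) := (Sym2.mem_and_mem_iff hyw).1 ⟨hy, hx.2⟩
        have hadj : G'.Adj y w := by
          rw [hG', deleteEdges_adj]
          refine ⟨?_, ?_⟩
          · have := hx.1
            rwa [hx'] at this
          · rw [← hx']
            exact hxe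
        exact hw (hr.trans hadj.reachable)
end

section
/- Let G be a connected unicyclic graph with unique cycle C such that every vertex of C has even degree in G. Then χ'_o(G) ≤ 2 unless G = C and C is an odd cycle. -/
open SimpleGraph Finset

variable {V : Type*} [Fintype V] [DecidableEq V]

/-- sum of colors (mod 2) at a vertex -/
def colSum (G : SimpleGraph V) [DecidableRel G.Adj] (f : Sym2 V → ZMod 2) (v : V) : ZMod 2 :=
  ∑ e ∈ G.incidenceFinset v, f e

theorem colSum_add (G : SimpleGraph V) [DecidableRel G.Adj] (f g : Sym2 V → ZMod 2) (v : V) :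
    colSum G (fun e => f e + g e) v = colSum G f v + colSum G g v := by
  simp [colSum, Finset.sum_add_distrib]

theorem colSum_single (G : SimpleGraph V) [DecidableRel G.Adj] {a b : V} (h : G.Adj a b)
    (c : ZMod 2) (v : V) :
    colSum G (fun e => if e = s(a, b) then c else 0) v
      = (if v = a then c else 0) + (if v = b then c else 0) := by
  have hne := h.ne
  unfold colSum
  rw [Finset.sum_ite_eq']
  simp only [mem_incidenceFinset, mk'_mem_incidenceSet_iff, h, true_and]
  by_cases h1 : v = a
  · subst h1; simp [hne]
  · simp [h1]

theorem walk_color (G : SimpleGraph V) [DecidableRel G.Adj] {u v : V} (p : G.Walk u v) :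
    ∀ c : ZMod 2, ∃ f : Sym2 V → ZMod 2, ∀ y, colSum G f y =
      (if y = u then c else 0) + (p.support.tail.count y : ZMod 2)
        + (if y = v then c + (p.length : ZMod 2) else 0) := by
  induction p with
  | @nil u =>
    intro c
    refine ⟨fun _ => 0, fun y => ?_⟩
    have h2 : ∀ c : ZMod 2, c + c = 0 := by decide
    by_cases h : y = u
    · simp [colSum, h, h2]
    · simp [colSum, h]
  | @cons u w v h p ih =>
    intro c
    obtain ⟨f, hf⟩ := ih (c + 1)
    refine ⟨fun e => (if e = s(u, w) then c else 0) + f e, fun y => ?_⟩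
    rw [colSum_add, colSum_single G h, hf]
    have h2 : (2 : ZMod 2) = 0 := by decide
    have e1 : (Walk.cons h p).support.tail = w :: p.support.tail := by
      rw [Walk.support_cons, List.tail_cons, Walk.cons_tail_support]
    rw [e1, List.count_cons]
    by_cases ha : y = w
    · subst ha
      simp only [if_true, Walk.length_cons, beq_self_eq_true]
      push_cast
      split_ifs <;> linear_combination c * h2
    · have ha' : ¬ (w = y) := fun h => ha h.symm
      simp only [ha, ha', if_false, Walk.length_cons, beq_iff_eq]
      push_cast
      split_ifs <;> ring

theorem count_add (G : SimpleGraph V) [DecidableRel G.Adj] (f : Sym2 V → Fin 2) (v : V) :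
    colorCount G f v 0 + colorCount G f v 1 = G.degree v := by
  rw [← card_incidenceFinset_eq_degree]
  unfold colorCount
  rw [← Finset.card_filter_add_card_filter_not (s := G.incidenceFinset v)
    (fun e => f e = 0)]
  congr 2
  refine Finset.filter_congr fun e _ => ?_
  generalize f e = t
  revert t
  decide

theorem oddAt_even (G : SimpleGraph V) [DecidableRel G.Adj] (f : Sym2 V → ZMod 2) (v : V)
    (hd : Even (G.degree v)) (hs : colSum G f v = 1) : OddAt G (k := 2) f v := by
  have h1 : ((colorCount G (k := 2) f v 1 : ℕ) : ZMod 2) = 1 := by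
    rw [← hs]
    unfold colorCount colSum
    rw [Finset.card_filter]
    push_cast
    refine Finset.sum_congr rfl fun e _ => ?_
    generalize f e = t
    revert t
    decide
  have h1' : Odd (colorCount G (k := 2) f v 1) := (ZMod.natCast_eq_one_iff_odd).1 h1
  have h0 : colorCount G (k := 2) f v 0 + colorCount G (k := 2) f v 1 = G.degree v :=
    count_add G f v
  intro i
  right
  fin_cases i
  · show Odd (colorCount G (k := 2) f v 0)
    rw [← h0] at hd
    by_contra hc
    rw [Nat.not_odd_iff_even] at hc
    exact (Nat.not_even_iff_odd.2 (hc.add_odd h1')) hd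
  · exact h1'

theorem oddAt_const (G : SimpleGraph V) [DecidableRel G.Adj] (f : Sym2 V → Fin 2) (v : V)
    (hd : Odd (G.degree v)) (c : Fin 2) (hs : ∀ e ∈ G.incidenceFinset v, f e = c) :
    OddAt G (k := 2) f v := by
  intro i
  unfold colorCount
  by_cases hi : c = i
  · right
    rw [Finset.filter_true_of_mem (fun e he => (hs e he).trans hi),
      card_incidenceFinset_eq_degree]
    exact hd
  · left
    rw [Finset.card_eq_zero, Finset.filter_eq_empty_iff]
    intro e he h
    exact hi ((hs e he).symm.trans h)

theorem oddAt_congr (G : SimpleGraph V) [DecidableRel G.Adj] (f g : Sym2 V → Fin 2) (v : V)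
    (h : ∀ w, G.Adj v w → f s(v, w) = g s(v, w)) (hf : OddAt G (k := 2) f v) :
    OddAt G (k := 2) g v := by
  intro i
  have : colorCount G (k := 2) g v i = colorCount G (k := 2) f v i := by
    unfold colorCount
    congr 1
    refine Finset.filter_congr fun e he => ?_
    rw [mem_incidenceFinset] at he
    obtain ⟨he1, he2⟩ := he
    obtain ⟨w, rfl⟩ := he2
    rw [h w he1]
  rw [this]
  exact hf i

/-- edges not inside S -/
def outE (G : SimpleGraph V) [DecidableRel G.Adj] (S : Finset V) : Finset (Sym2 V) :=
  G.edgeFinset.filter (fun e => ∃ y ∈ e, y ∉ S)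

theorem exists_bdry (G : SimpleGraph V) (hG : G.Connected) (S : Finset V)
    (hS : S.Nonempty) (hne : S ≠ Finset.univ) : ∃ u ∈ S, ∃ v, v ∉ S ∧ G.Adj u v := by
  obtain ⟨a, ha⟩ := hS
  obtain ⟨b, hb⟩ : ∃ b, b ∉ S := by
    by_contra! h
    exact hne (Finset.eq_univ_iff_forall.2 h)
  obtain ⟨p⟩ := hG.preconnected a b
  obtain ⟨d, _, h1, h2⟩ := p.exists_boundary_dart (S : Set V) (by simpa using ha) (by simpa using hb)
  exact ⟨d.fst, by simpa using h1, d.snd, by simpa using h2, d.adj⟩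

theorem outE_insert (G : SimpleGraph V) [DecidableRel G.Adj] (S : Finset V) (v : V) (hv : v ∉ S)
    (U : Finset V) (hU : U ⊆ S) (hA : ∀ u ∈ U, G.Adj v u) :
    (outE G (insert v S)).card + U.card ≤ (outE G S).card := by
  have hinj : (U.image (fun u => s(v, u))).card = U.card := by
    apply Finset.card_image_of_injective
    intro a b h
    exact (Sym2.congr_right).1 h
  rw [← hinj, ← Finset.card_union_of_disjoint]
  · apply Finset.card_le_card
    intro e he
    rw [Finset.mem_union] at he
    rcases he with he | he
    · simp only [outE, Finset.mem_filter] at he ⊢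
      obtain ⟨h1, y, hy, hyS⟩ := he
      exact ⟨h1, y, hy, fun h => hyS (Finset.mem_insert_of_mem h)⟩
    · obtain ⟨u, hu, rfl⟩ := Finset.mem_image.1 he
      simp only [outE, Finset.mem_filter]
      exact ⟨by simpa using hA u hu, v, by simp, hv⟩
  · rw [Finset.disjoint_left]
    intro e he he'
    obtain ⟨u, hu, rfl⟩ := Finset.mem_image.1 he'
    simp only [outE, Finset.mem_filter] at he
    obtain ⟨_, y, hy, hyS⟩ := he
    apply hyS
    rcases Sym2.mem_iff.1 hy with rfl | rfl
    · simp
    · exact Finset.mem_insert_of_mem (hU hu)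

theorem outE_lower (G : SimpleGraph V) [DecidableRel G.Adj] (hG : G.Connected) :
    ∀ (n : ℕ) (S : Finset V), S.Nonempty → Sᶜ.card = n → n ≤ (outE G S).card := by
  intro n
  induction n with
  | zero => intros; simp
  | succ n ih =>
    intro S hS hn
    have hne : S ≠ Finset.univ := by
      rintro rfl
      simp at hn
    obtain ⟨u, hu, v, hv, huv⟩ := exists_bdry G hG S hS hne
    have h1 := outE_insert G S v hv {u} (by simpa using hu) (by simpa using huv.symm)
    have h2 := ih (insert v S) (Finset.insert_nonempty _ _) (by
      rw [Finset.compl_insert, Finset.card_erase_of_mem (by simpa using hv), hn]; rfl)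
    simp only [Finset.card_singleton] at h1
    omega

theorem extend_color (G : SimpleGraph V) [DecidableRel G.Adj] (hG : G.Connected) :
    ∀ (n : ℕ) (S : Finset V), S.Nonempty → Sᶜ.card = n → (outE G S).card ≤ n →
      (∃ f : Sym2 V → ZMod 2, ∀ v ∈ S, OddAt G (k := 2) f v) →
      ∃ f : Sym2 V → ZMod 2, ∀ v, OddAt G (k := 2) f v := by
  intro n
  induction n with
  | zero =>
    rintro S _ hn _ ⟨f, hf⟩
    refine ⟨f, fun v => hf v ?_⟩
    rw [Finset.card_eq_zero, Finset.compl_eq_empty_iff] at hn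
    simp [hn]
  | succ n ih =>
    rintro S hS hn hout ⟨f, hf⟩
    have hne : S ≠ Finset.univ := by
      rintro rfl
      simp at hn
    obtain ⟨u, hu, v, hv, huv⟩ := exists_bdry G hG S hS hne
    have hcard : (insert v S)ᶜ.card = n := by
      rw [Finset.compl_insert, Finset.card_erase_of_mem (by simpa using hv), hn]; rfl
    have h1 := outE_insert G S v hv {u} (by simpa using hu) (by simpa using huv.symm)
    rw [Finset.card_singleton] at h1
    have h2 := outE_lower G hG n (insert v S) (Finset.insert_nonempty _ _) hcard
    have huniq : ∀ z ∈ S, G.Adj v z → z = u := by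
      intro z hz hvz
      by_contra hzu
      have h3 := outE_insert G S v hv {z, u}
        (by intro a ha; simp at ha; rcases ha with rfl | rfl <;> assumption)
        (by intro a ha; simp at ha; rcases ha with rfl | rfl; exacts [hvz, huv.symm])
      rw [Finset.card_pair hzu] at h3
      omega
    refine ih (insert v S) (Finset.insert_nonempty _ _) hcard (by omega) ?_
    rcases Nat.even_or_odd (G.degree v) with hd | hd
    · have hpos : 0 < G.degree v := (G.degree_pos_iff_exists_adj v).2 ⟨u, huv.symm⟩
      have h2d : 1 < (G.neighborFinset v).card := by
        rw [card_neighborFinset_eq_degree]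
        obtain ⟨k, hk⟩ := hd
        omega
      obtain ⟨z, hz, hzu⟩ := Finset.exists_mem_ne h2d u
      rw [mem_neighborFinset] at hz
      have hzS : z ∉ S := fun h => hzu (huniq z h hz)
      refine ⟨fun e => f e + (if e = s(v, z) then 1 + colSum G f v else 0), ?_⟩
      intro s hs
      rcases Finset.mem_insert.1 hs with rfl | hsS
      · apply oddAt_even _ _ _ hd
        rw [colSum_add, colSum_single G hz]
        simp only [if_true, hz.ne, if_false]
        generalize colSum G f s = t
        revert t
        decide
      · refine oddAt_congr G f _ s (fun w hw => ?_) (hf s hsS)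
        have : s(s, w) ≠ s(v, z) := by
          intro h
          have : s ∈ s(v, z) := h ▸ Sym2.mem_mk_left s w
          rcases Sym2.mem_iff.1 this with rfl | rfl
          · exact hv hsS
          · exact hzS hsS
        simp [this]
        rfl
    · refine ⟨fun e => if v ∈ e then f s(u, v) else f e, ?_⟩
      intro s hs
      rcases Finset.mem_insert.1 hs with rfl | hsS
      · apply oddAt_const _ _ _ hd (f s(u, s))
        intro e he
        rw [mem_incidenceFinset] at he
        simp [he.2]
        rfl
      · refine oddAt_congr G f _ s (fun w hw => ?_) (hf s hsS)
        by_cases hvm : v ∈ s(s, w)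
        · rcases Sym2.mem_iff.1 hvm with rfl | rfl
          · exact absurd hsS hv
          · have := huniq s hsS hw.symm
            subst this
            simp
            rfl
        · simp [hvm]
          rfl

theorem cycle_color (G : SimpleGraph V) [DecidableRel G.Adj] {x : V} (C : G.Walk x x)
    (hC : C.IsCycle) : ∃ f : Sym2 V → ZMod 2, ∀ y ∈ C.support,
      colSum G f y = 1 + (if y = x then (C.length : ZMod 2) else 0) := by
  obtain ⟨f, hf⟩ := walk_color G C 0
  refine ⟨f, fun y hy => ?_⟩
  rw [hf, List.count_eq_one_of_mem hC.support_nodup]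
  · simp
  · rcases (Walk.mem_support_iff C).1 hy with rfl | h
    · exact Walk.end_mem_tail_support hC.not_nil
    · exact h

set_option linter.unusedSectionVars false in
theorem cycle_card (G : SimpleGraph V) {x : V} (C : G.Walk x x)
    (hC : C.IsCycle) : C.support.toFinset.card = C.length := by
  have : C.support.toFinset = C.support.tail.toFinset := by
    ext y
    simp only [List.mem_toFinset]
    constructor
    · intro hy
      rcases (Walk.mem_support_iff C).1 hy with rfl | h
      · exact Walk.end_mem_tail_support hC.not_nil
      · exact h
    · exact List.mem_of_mem_tail
  rw [this, List.toFinset_card_of_nodup hC.support_nodup]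
  simp

theorem unicyclic_even_cycle_degrees (G : SimpleGraph V) [DecidableRel G.Adj]
    (hG : G.Connected) (hUni : G.edgeFinset.card = Fintype.card V)
    (x : V) (C : G.Walk x x) (hC : C.IsCycle)
    (hdeg : ∀ v ∈ C.support, Even (G.degree v)) :
    oddChromIndex G ≤ 2 ∨ (Odd C.length ∧ ∀ e ∈ G.edgeSet, e ∈ C.edges) := by
  have hcard := cycle_card G C hC
  have hecard : C.edges.toFinset.card = C.length := by
    rw [List.toFinset_card_of_nodup hC.edges_nodup, Walk.length_edges]
  have hesub : C.edges.toFinset ⊆ G.edgeFinset := by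
    intro e he
    rw [List.mem_toFinset] at he
    simpa using C.edges_subset_edgeSet he
  have key : (∃ f : Sym2 V → ZMod 2, ∀ v ∈ C.support.toFinset, OddAt G (k := 2) f v) →
      oddChromIndex G ≤ 2 := by
    intro h
    have hout : (outE G C.support.toFinset).card ≤ (C.support.toFinset)ᶜ.card := by
      have : outE G C.support.toFinset ⊆ G.edgeFinset \ C.edges.toFinset := by
        intro e he
        simp only [outE, Finset.mem_filter] at he
        obtain ⟨h1, y, hy, hyS⟩ := he
        rw [Finset.mem_sdiff]
        refine ⟨h1, fun h2 => hyS ?_⟩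
        rw [List.mem_toFinset] at h2 ⊢
        exact Walk.mem_support_of_mem_edges h2 hy
      refine (Finset.card_le_card this).trans ?_
      rw [Finset.card_sdiff_of_subset hesub, Finset.card_compl, hUni, hecard, hcard]
    obtain ⟨f, hf⟩ := extend_color G hG _ C.support.toFinset ⟨x, by simp⟩ rfl hout h
    exact Nat.sInf_le ⟨f, hf⟩
  rcases Nat.even_or_odd C.length with hl | hl
  · left
    apply key
    obtain ⟨f, hf⟩ := cycle_color G C hC
    refine ⟨f, fun v hv => ?_⟩
    rw [List.mem_toFinset] at hv
    apply oddAt_even _ _ _ (hdeg v hv)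
    rw [hf v hv, (ZMod.natCast_eq_zero_iff_even).2 hl]
    simp
  · by_cases hu : C.support.toFinset = Finset.univ
    · right
      refine ⟨hl, fun e he => ?_⟩
      have : C.edges.toFinset = G.edgeFinset := by
        apply Finset.eq_of_subset_of_card_le hesub
        rw [hUni, hecard, ← hcard, hu, Finset.card_univ]
      rw [← List.mem_toFinset, this]
      simpa using he
    · left
      apply key
      obtain ⟨w, hw, z, hz, hwz⟩ := exists_bdry G hG _ ⟨x, by simp⟩ hu
      rw [List.mem_toFinset] at hw hz
      obtain ⟨f, hf⟩ := cycle_color G (C.rotate w hw) (hC.rotate hw)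
      refine ⟨fun e => f e + (if e = s(w, z) then 1 else 0), fun v hv => ?_⟩
      rw [List.mem_toFinset] at hv
      have hvz : v ≠ z := fun h => hz (h ▸ hv)
      apply oddAt_even _ _ _ (hdeg v hv)
      rw [colSum_add, colSum_single G hwz, hf v (by simpa using hv)]
      have hl' : ((C.rotate w hw).length : ZMod 2) = 1 := by
        rw [ZMod.natCast_eq_one_iff_odd]
        simpa using hl
      rw [hl']
      by_cases hvw : v = w
      · simp only [hvw, if_true, hwz.ne, if_false]
        decide
      · simp [hvw, hvz]
end

section
/- Let G be a unicyclic graph with cycle C. Then χ'_o(G) = 3 if and only if the set {v ∈ V(C) : d_G(v) = 2} has odd size and the set {v ∈ V(C) : d_G(v) is even and d_G(v) ≠ 2} is empty; otherwise χ'_o(G) ≤ 2 (or χ'_o(G) ≤ 1 when G is odd). -/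
open SimpleGraph Finset

variable {V : Type*} [Fintype V] [DecidableEq V]

lemma aux_two {E : Type*} [DecidableEq E] {k : ℕ} (I T : Finset E) (hT : T ⊆ I) (a c : Fin k)
    (hac : a ≠ c) (h1 : Odd T.card) (h2 : Odd (I \ T).card) (i : Fin k) :
    (I.filter (fun e => (if e ∈ T then a else c) = i)).card = 0 ∨
      Odd (I.filter (fun e => (if e ∈ T then a else c) = i)).card := by
  by_cases hi : i = a
  · right
    have : I.filter (fun e => (if e ∈ T then a else c) = i) = T := by
      ext e; simp only [Finset.mem_filter]
      have := @hT e
      split_ifs <;> grind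
    rwa [this]
  · by_cases hi' : i = c
    · right
      have : I.filter (fun e => (if e ∈ T then a else c) = i) = I \ T := by
        ext e; simp only [Finset.mem_filter, Finset.mem_sdiff]
        split_ifs <;> grind
      rwa [this]
    · left
      rw [Finset.card_eq_zero, Finset.filter_eq_empty_iff]
      intro e _
      split_ifs <;> grind

def LocalCond (d k : ℕ) (a b : Fin k) : Prop :=
  (Odd d ∧ a = b) ∨ (Even d ∧ a ≠ b) ∨ (Even d ∧ 4 ≤ d ∧ 2 ≤ k) ∨ (Odd d ∧ 3 ≤ d ∧ 3 ≤ k)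

lemma local_ext {E : Type*} [DecidableEq E] {k : ℕ} (I : Finset E) (e1 e2 : E) (h1 : e1 ∈ I)
    (h2 : e2 ∈ I) (h12 : e1 ≠ e2) (a b : Fin k) (h : LocalCond I.card k a b) :
    ∃ h : E → Fin k, h e1 = a ∧ h e2 = b ∧
      ∀ i, (I.filter (fun e => h e = i)).card = 0 ∨ Odd (I.filter (fun e => h e = i)).card := by
  have hsub : ({e1, e2} : Finset E) ⊆ I := by
    intro e; simp; rintro (rfl | rfl) <;> assumption
  have hc2 : ({e1, e2} : Finset E).card = 2 := Finset.card_pair h12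
  have key1 : Odd I.card → a = b → ∃ h : E → Fin k, h e1 = a ∧ h e2 = b ∧
      ∀ i, (I.filter (fun e => h e = i)).card = 0 ∨
        Odd (I.filter (fun e => h e = i)).card := by
    rintro ho rfl
    refine ⟨fun _ => a, rfl, rfl, fun i => ?_⟩
    by_cases hi : a = i
    · right; simpa [hi] using ho
    · left; simp [hi]
  have key2 : Even I.card → a ≠ b → ∃ h : E → Fin k, h e1 = a ∧ h e2 = b ∧
      ∀ i, (I.filter (fun e => h e = i)).card = 0 ∨
        Odd (I.filter (fun e => h e = i)).card := by
    intro ho hab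
    refine ⟨fun e => if e ∈ ({e1} : Finset E) then a else b, by simp, by simp [h12.symm],
      aux_two I {e1} (by simpa using h1) a b hab (by simp) ?_⟩
    rw [Finset.card_sdiff_of_subset (by simpa using h1)]
    have := Finset.card_pos.2 ⟨e1, h1⟩
    rw [Finset.card_singleton]
    rw [Nat.odd_iff]; rw [Nat.even_iff] at ho; omega
  rcases h with ⟨ho, hab⟩ | ⟨he, hab⟩ | ⟨he, h4, hk⟩ | ⟨ho, h3, hk⟩
  · exact key1 ho hab
  · exact key2 he hab
  · by_cases hab : a = b
    swap
    · exact key2 he hab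
    subst hab
    obtain ⟨e3, he3, hn⟩ := Finset.exists_mem_notMem_of_card_lt_card
      (show ({e1, e2} : Finset E).card < I.card by omega)
    obtain ⟨c, hc⟩ : ∃ c : Fin k, a ≠ c := by
      have : Nontrivial (Fin k) := Fin.nontrivial_iff_two_le.2 hk
      obtain ⟨c, hc⟩ := exists_ne a
      exact ⟨c, hc.symm⟩
    have hs : insert e3 ({e1, e2} : Finset E) ⊆ I := Finset.insert_subset he3 hsub
    have hcc : (insert e3 ({e1, e2} : Finset E)).card = 3 := by
      rw [Finset.card_insert_of_notMem hn, hc2]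
    refine ⟨fun e => if e ∈ insert e3 ({e1, e2} : Finset E) then a else c, by simp, by simp,
      aux_two I _ hs a c hc (by rw [hcc]; decide) ?_⟩
    rw [Finset.card_sdiff_of_subset hs, hcc]
    rw [Nat.odd_iff]; rw [Nat.even_iff] at he; omega
  · by_cases hab : a = b
    · exact key1 ho hab
    obtain ⟨c, hc⟩ : ∃ c : Fin k, c ∉ ({a, b} : Finset (Fin k)) := by
      by_contra! hcon
      have := Finset.card_le_card (fun x _ => hcon x : (Finset.univ : Finset (Fin k)) ⊆ {a, b})
      have h2 := Finset.card_le_two (a := a) (b := b)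
      simp only [Finset.card_univ, Fintype.card_fin] at this
      omega
    simp only [Finset.mem_insert, Finset.mem_singleton, not_or] at hc
    refine ⟨fun e => if e = e1 then a else if e = e2 then b else c, by simp,
      by simp [h12.symm], fun i => ?_⟩
    by_cases hia : i = a
    · right
      have : I.filter (fun e => (if e = e1 then a else if e = e2 then b else c) = i) = {e1} := by
        ext e; simp only [Finset.mem_filter, Finset.mem_singleton]
        split_ifs <;> grind
      rw [this]; simp
    by_cases hib : i = b
    · right
      have : I.filter (fun e => (if e = e1 then a else if e = e2 then b else c) = i) = {e2} := by
        ext e; simp only [Finset.mem_filter, Finset.mem_singleton]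
        split_ifs <;> grind
      rw [this]; simp
    by_cases hic : i = c
    · right
      have : I.filter (fun e => (if e = e1 then a else if e = e2 then b else c) = i)
          = I \ {e1, e2} := by
        ext e; simp only [Finset.mem_filter, Finset.mem_sdiff, Finset.mem_insert,
          Finset.mem_singleton]
        split_ifs <;> grind
      rw [this, Finset.card_sdiff_of_subset hsub, hc2]
      rw [Nat.odd_iff] at *; omega
    · left
      rw [Finset.card_eq_zero, Finset.filter_eq_empty_iff]
      intro e _
      beta_reduce
      split_ifs <;> grind

/-- edges inside `S` -/
def inEdges (G : SimpleGraph V) [DecidableRel G.Adj] (S : Finset V) : Finset (Sym2 V) :=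
  G.edgeFinset.filter (fun e => ∀ v ∈ e, v ∈ S)

lemma inEdges_step (G : SimpleGraph V) [DecidableRel G.Adj] (S : Finset V) (v : V) (hv : v ∉ S) :
    (inEdges G S).card + (G.neighborFinset v ∩ S).card ≤ (inEdges G (insert v S)).card := by
  have hi : ((G.neighborFinset v ∩ S).image (fun w => s(v, w))).card
      = (G.neighborFinset v ∩ S).card := by
    apply Finset.card_image_of_injective
    intro a b h
    exact Sym2.congr_right.1 h
  rw [← hi, ← Finset.card_union_of_disjoint]
  · apply Finset.card_le_card
    intro e he
    rw [Finset.mem_union] at he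
    rcases he with he | he
    · simp only [inEdges, Finset.mem_filter] at he ⊢
      exact ⟨he.1, fun w hw => Finset.mem_insert_of_mem (he.2 w hw)⟩
    · simp only [Finset.mem_image, Finset.mem_inter, mem_neighborFinset] at he
      obtain ⟨w, ⟨h1, h2⟩, rfl⟩ := he
      simp only [inEdges, Finset.mem_filter, mem_edgeFinset, mem_edgeSet]
      refine ⟨h1, ?_⟩
      intro z hz
      rw [Sym2.mem_iff] at hz
      rcases hz with rfl | rfl <;> simp [h2]
  · rw [Finset.disjoint_left]
    intro e he he'
    simp only [Finset.mem_image] at he'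
    obtain ⟨w, _, rfl⟩ := he'
    simp only [inEdges, Finset.mem_filter] at he
    exact hv (he.2 v (by simp))

lemma exists_boundary (G : SimpleGraph V) (hG : G.Connected) (S : Finset V)
    (hS : S.Nonempty) (hne : S ≠ Finset.univ) : ∃ v, v ∉ S ∧ ∃ w ∈ S, G.Adj v w := by
  obtain ⟨s, hs⟩ := hS
  obtain ⟨t, ht⟩ : ∃ t, t ∉ S := by
    by_contra! h
    exact hne (Finset.eq_univ_iff_forall.2 h)
  obtain ⟨p⟩ := hG.preconnected s t
  obtain ⟨d, _, h1, h2⟩ := p.exists_boundary_dart (S : Set V) (by simpa) (by simpa)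
  exact ⟨d.snd, by simpa using h2, d.fst, by simpa using h1, d.adj.symm⟩

lemma inEdges_bound (G : SimpleGraph V) [DecidableRel G.Adj] (hG : G.Connected) (n : ℕ) :
    ∀ S : Finset V, S.Nonempty → Sᶜ.card = n → (inEdges G S).card + n ≤ G.edgeFinset.card := by
  induction n with
  | zero =>
    intro S _ _
    exact Finset.card_le_card (Finset.filter_subset _ _)
  | succ n ih =>
    intro S hS hc
    have hne : S ≠ Finset.univ := by rintro rfl; simp at hc
    obtain ⟨v, hv, w, hw, hvw⟩ := exists_boundary G hG S hS hne
    have h1 := inEdges_step G S v hv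
    have h2 : 0 < (G.neighborFinset v ∩ S).card :=
      Finset.card_pos.2 ⟨w, by simp [hw, hvw]⟩
    have h3 := ih (insert v S) (Finset.insert_nonempty _ _) (by
      have := Finset.card_insert_of_notMem hv
      rw [Finset.card_compl] at *
      omega)
    omega

lemma nbr_le_one (G : SimpleGraph V) [DecidableRel G.Adj] (hG : G.Connected)
    (hUni : G.edgeFinset.card = Fintype.card V) (S : Finset V) 
    (hin : S.card ≤ (inEdges G S).card) (v : V) (hv : v ∉ S) :
    (G.neighborFinset v ∩ S).card ≤ 1 := by
  have h1 := inEdges_step G S v hv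
  have h2 := inEdges_bound G hG _ (insert v S) (Finset.insert_nonempty _ _) rfl
  rw [Finset.card_compl] at h2
  have := Finset.card_insert_of_notMem hv
  have := Finset.card_le_univ (insert v S)
  omega

lemma colorCount_congr (G : SimpleGraph V) [DecidableRel G.Adj] {k : ℕ}
    (f g : Sym2 V → Fin k) (v : V) (h : ∀ e ∈ G.incidenceFinset v, f e = g e)
    (hf : OddAt G f v) : OddAt G g v := by
  intro i
  have : colorCount G g v i = colorCount G f v i := by
    unfold colorCount
    congr 1
    apply Finset.filter_congr
    intro e he
    rw [h e he]
  rw [this]; exact hf i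

lemma tree_ext (G : SimpleGraph V) [DecidableRel G.Adj] (hG : G.Connected)
    (hUni : G.edgeFinset.card = Fintype.card V) {k : ℕ} (hk : 2 ≤ k) (n : ℕ) :
    ∀ S : Finset V, S.Nonempty → Sᶜ.card = n → S.card ≤ (inEdges G S).card →
      (∃ f : Sym2 V → Fin k, ∀ v ∈ S, OddAt G f v) → ∃ f : Sym2 V → Fin k, IsOddColoring G f := by
  induction n with
  | zero =>
    rintro S _ hc _ ⟨f, hf⟩
    refine ⟨f, fun v => hf v ?_⟩
    rw [Finset.card_eq_zero, Finset.compl_eq_empty_iff] at hc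
    simp [hc]
  | succ n ih =>
    rintro S hS hc hin ⟨f, hf⟩
    have hne : S ≠ Finset.univ := by rintro rfl; simp at hc
    obtain ⟨v, hv, w, hw, hvw⟩ := exists_boundary G hG S hS hne
    have h1 := inEdges_step G S v hv
    have hle := nbr_le_one G hG hUni S hin v hv
    have hwm : w ∈ G.neighborFinset v ∩ S := by simp [hw, hvw]
    have h2 : 0 < (G.neighborFinset v ∩ S).card := Finset.card_pos.2 ⟨w, hwm⟩
    have hci := Finset.card_insert_of_notMem hv
    refine ih (insert v S) (Finset.insert_nonempty _ _) ?_ (by omega) ?_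
    · rw [Finset.card_compl] at *
      omega
    have huniq : ∀ u ∈ S, G.Adj v u → u = w := by
      intro u hu hvu
      exact Finset.card_le_one.1 hle u (by simp [hu, hvu]) w hwm
    obtain ⟨c, hc⟩ : ∃ c : Fin k, f s(v, w) ≠ c := by
      have : Nontrivial (Fin k) := Fin.nontrivial_iff_two_le.2 hk
      obtain ⟨c, hc⟩ := exists_ne (f s(v, w))
      exact ⟨c, hc.symm⟩
    have hmem : s(v, w) ∈ G.incidenceFinset v := by
      simp [mem_incidenceFinset, hvw]
    obtain ⟨h, hh1, hh2⟩ : ∃ h : Sym2 V → Fin k, h s(v, w) = f s(v, w) ∧ OddAt G h v := by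
      rcases Nat.even_or_odd (G.incidenceFinset v).card with he | ho
      · refine ⟨fun e => if e ∈ ({s(v, w)} : Finset (Sym2 V)) then f s(v, w) else c, by simp, ?_⟩
        intro i
        refine aux_two (G.incidenceFinset v) {s(v, w)} (by simpa using hmem) _ c hc (by simp) ?_ i
        rw [Finset.card_sdiff_of_subset (by simpa using hmem), Finset.card_singleton]
        have := Finset.card_pos.2 ⟨_, hmem⟩
        rw [Nat.odd_iff]; rw [Nat.even_iff] at he; omega
      · refine ⟨fun _ => f s(v, w), rfl, ?_⟩
        intro i
        unfold colorCount
        by_cases hi : f s(v, w) = i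
        · right; simpa [hi] using ho
        · left; simp [hi]
    refine ⟨fun e => if v ∈ e then h e else f e, ?_⟩
    intro u hu
    rw [Finset.mem_insert] at hu
    rcases hu with rfl | hu
    · refine colorCount_congr G h _ u ?_ hh2
      intro e he
      have : u ∈ e := by
        rw [mem_incidenceFinset] at he
        exact he.2
      simp [this]
    · refine colorCount_congr G f _ u ?_ (hf u hu)
      intro e he
      rw [mem_incidenceFinset] at he
      by_cases hve : v ∈ e
      · have huv : v ≠ u := by rintro rfl; exact hv hu
        have : e = s(v, u) := ((Sym2.mem_and_mem_iff huv).1 ⟨hve, he.2⟩)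
        subst this
        have := huniq u hu he.1
        subst this
        simp [hh1]
      · simp [hve]

section cyc
set_option linter.unusedSectionVars false
variable {G : SimpleGraph V} [DecidableRel G.Adj] {x : V}

/-- the `i`-th edge of a walk -/
def cedge (C : G.Walk x x) (i : ℕ) : Sym2 V := s(C.getVert i, C.getVert (i + 1))

/-- cyclic predecessor -/
def cprev (n i : ℕ) : ℕ := if i = 0 then n - 1 else i - 1

lemma cedge_eq (C : G.Walk x x) (i : ℕ) (h : i < C.edges.length) : C.edges[i] = cedge C i :=
  Walk.getElem_edges h

lemma cedge_inj {C : G.Walk x x} (hC : C.IsCycle) {i j : ℕ} (hi : i < C.length)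
    (hj : j < C.length) (h : cedge C i = cedge C j) : i = j := by
  have h1 : i < C.edges.length := by rwa [Walk.length_edges]
  have h2 : j < C.edges.length := by rwa [Walk.length_edges]
  rw [← cedge_eq C i h1, ← cedge_eq C j h2] at h
  exact (hC.edges_nodup.getElem_inj_iff).1 h

lemma mem_support_iff_lt {C : G.Walk x x} (hC : C.IsCycle) (v : V) :
    v ∈ C.support ↔ ∃ i < C.length, C.getVert i = v := by
  have h3 := hC.three_le_length
  rw [Walk.mem_support_iff_exists_getVert]
  constructor
  · rintro ⟨i, rfl, hi⟩
    rcases hi.lt_or_eq with h | h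
    · exact ⟨i, h, rfl⟩
    · exact ⟨0, by omega, by simp [h]⟩
  · rintro ⟨i, hi, rfl⟩
    exact ⟨i, rfl, hi.le⟩

lemma getVert_inj {C : G.Walk x x} (hC : C.IsCycle) {i j : ℕ} (hi : i < C.length)
    (hj : j < C.length) (h : C.getVert i = C.getVert j) : i = j :=
  hC.getVert_injOn' (by simp only [Set.mem_ofPred_eq]; omega)
    (by simp only [Set.mem_ofPred_eq]; omega) h

lemma support_eq_image {C : G.Walk x x} (hC : C.IsCycle) :
    C.support.toFinset = (Finset.range C.length).image C.getVert := by
  ext v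
  simp [mem_support_iff_lt hC]

lemma sum_support {C : G.Walk x x} (hC : C.IsCycle) (g : V → ℕ) :
    ∑ v ∈ C.support.toFinset, g v = ∑ i ∈ Finset.range C.length, g (C.getVert i) := by
  rw [support_eq_image hC, Finset.sum_image]
  intro i hi j hj h
  simp only [Finset.coe_range, Set.mem_Iio] at hi hj
  exact getVert_inj hC hi hj h

lemma cprev_lt {n i : ℕ} (hi : i < n) : cprev n i < n := by
  unfold cprev; split_ifs <;> omega

lemma getVert_cprev {C : G.Walk x x} (i : ℕ) (hi : i < C.length) :
    C.getVert (cprev C.length i + 1) = C.getVert i := by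
  unfold cprev
  split_ifs with h
  · subst h
    rw [Nat.sub_add_cancel (by omega)]; simp
  · rw [Nat.sub_add_cancel (by omega)]

lemma cedge_mem (C : G.Walk x x) (i : ℕ) (hi : i < C.length) :
    cedge C i ∈ G.incidenceFinset (C.getVert i) := by
  rw [mem_incidenceFinset]
  exact ⟨C.adj_getVert_succ hi, by simp [cedge]⟩

lemma cedge_prev_mem (C : G.Walk x x) (i : ℕ) (hi : i < C.length) :
    cedge C (cprev C.length i) ∈ G.incidenceFinset (C.getVert i) := by
  rw [mem_incidenceFinset]
  exact ⟨C.adj_getVert_succ (cprev_lt hi), by simp [cedge, getVert_cprev i hi]⟩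

lemma cedge_prev_ne {C : G.Walk x x} (hC : C.IsCycle) (i : ℕ) (hi : i < C.length) :
    cedge C (cprev C.length i) ≠ cedge C i := by
  have h3 := hC.three_le_length
  intro h
  have := cedge_inj hC (cprev_lt hi) hi h
  unfold cprev at this
  split_ifs at this <;> omega

lemma mem_cedge {C : G.Walk x x} (hC : C.IsCycle) (i j : ℕ) (hi : i < C.length)
    (hj : j < C.length) (h : C.getVert i ∈ cedge C j) : j = i ∨ j = cprev C.length i := by
  unfold cedge at h
  rw [Sym2.mem_iff] at h
  rcases h with h | h
  · left; exact (getVert_inj hC hi hj h).symm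
  · right
    unfold cprev
    by_cases hj' : j + 1 < C.length
    · have := getVert_inj hC hi hj' h
      subst this; simp
    · have hje : j + 1 = C.length := by omega
      rw [hje, Walk.getVert_length] at h
      have : i = 0 := getVert_inj hC hi (by omega) (by simpa using h)
      simp [this]; omega

lemma two_le_degree {C : G.Walk x x} (hC : C.IsCycle) (i : ℕ) (hi : i < C.length) :
    2 ≤ G.degree (C.getVert i) := by
  rw [← card_incidenceFinset_eq_degree, ← Finset.card_pair (cedge_prev_ne hC i hi)]
  apply Finset.card_le_card
  intro e he
  simp only [Finset.mem_insert, Finset.mem_singleton] at he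
  rcases he with rfl | rfl
  · exact cedge_prev_mem C i hi
  · exact cedge_mem C i hi

lemma inEdges_cycle (hG : G.Connected) (hUni : G.edgeFinset.card = Fintype.card V)
    {C : G.Walk x x} (hC : C.IsCycle) :
    C.support.toFinset.card = C.length ∧ inEdges G C.support.toFinset = C.edges.toFinset := by
  have h1 : C.support.toFinset.card = C.length := by
    have := sum_support hC (fun _ => 1)
    simpa using this
  refine ⟨h1, ?_⟩
  symm
  apply Finset.eq_of_subset_of_card_le
  · intro e he
    rw [List.mem_toFinset] at he
    simp only [inEdges, Finset.mem_filter, mem_edgeFinset, List.mem_toFinset]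
    refine ⟨C.edges_subset_edgeSet he, fun v hv => ?_⟩
    exact C.mem_support_of_mem_edges he hv
  · rw [List.toFinset_card_of_nodup hC.edges_nodup, Walk.length_edges]
    have := inEdges_bound G hG _ C.support.toFinset ⟨x, by simp⟩ rfl
    rw [Finset.card_compl] at this
    have := Finset.card_le_univ C.support.toFinset
    omega

lemma cyc_color (hG : G.Connected) (hUni : G.edgeFinset.card = Fintype.card V)
    {C : G.Walk x x} (hC : C.IsCycle) {k : ℕ} (hk : 2 ≤ k) (col : ℕ → Fin k)
    (hcond : ∀ i < C.length,
      LocalCond (G.degree (C.getVert i)) k (col (cprev C.length i)) (col i)) :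
    ∃ f : Sym2 V → Fin k, IsOddColoring G f := by
  obtain ⟨hcard, hin⟩ := inEdges_cycle hG hUni hC
  refine tree_ext G hG hUni hk _ C.support.toFinset ⟨x, by simp⟩ rfl ?_ ?_
  · rw [hin, List.toFinset_card_of_nodup hC.edges_nodup, Walk.length_edges, hcard]
  have hloc : ∀ v, ∃ h : Sym2 V → Fin k, v ∈ C.support →
      (∀ j < C.length, v ∈ cedge C j → h (cedge C j) = col j) ∧ OddAt G h v := by
    intro v
    by_cases hv : v ∈ C.support
    swap
    · exact ⟨fun _ => ⟨0, by omega⟩, fun h => absurd h hv⟩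
    obtain ⟨i, hi, rfl⟩ := (mem_support_iff_lt hC v).1 hv
    obtain ⟨h, h1, h2, h3⟩ := local_ext (G.incidenceFinset (C.getVert i)) _ _
      (cedge_prev_mem C i hi) (cedge_mem C i hi) (cedge_prev_ne hC i hi)
      (col (cprev C.length i)) (col i) (by
        rw [card_incidenceFinset_eq_degree]; exact hcond i hi)
    refine ⟨h, fun _ => ⟨?_, h3⟩⟩
    intro j hj hm
    rcases mem_cedge hC i j hi hj hm with rfl | rfl
    · exact h2
    · exact h1
  choose H hH using hloc
  classical
  refine ⟨fun e => if hh : ∃ v, v ∈ C.support ∧ v ∈ e then H hh.choose e else ⟨0, by omega⟩, ?_⟩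
  intro v hv
  rw [List.mem_toFinset] at hv
  refine colorCount_congr G (H v) _ v ?_ (hH v hv).2
  intro e he
  rw [mem_incidenceFinset] at he
  have hh : ∃ v, v ∈ C.support ∧ v ∈ e := ⟨v, hv, he.2⟩
  simp only [dif_pos hh]
  obtain ⟨hu1, hu2⟩ := hh.choose_spec
  generalize hh.choose = u at hu1 hu2
  by_cases huv : u = v
  · rw [huv]
  have hes : e = s(u, v) := (Sym2.mem_and_mem_iff huv).1 ⟨hu2, he.2⟩
  have hmem : e ∈ C.edges := by
    rw [← List.mem_toFinset, ← hin]
    simp only [inEdges, Finset.mem_filter, mem_edgeFinset, List.mem_toFinset]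
    refine ⟨he.1, ?_⟩
    intro w hw
    rw [hes, Sym2.mem_iff] at hw
    rcases hw with rfl | rfl <;> assumption
  obtain ⟨j, hj, hje⟩ := List.mem_iff_getElem.1 hmem
  rw [cedge_eq] at hje
  rw [Walk.length_edges] at hj
  subst hje
  rw [(hH v hv).1 j hj he.2, (hH u hu1).1 j hj hu2]

lemma deg_zero (C : G.Walk x x) : G.degree (C.getVert 0) = G.degree x :=
  congrArg (fun v => G.degree v) C.getVert_zero

/-- number of even-degree vertices among positions `1..i` -/
def cnt (C : G.Walk x x) (i : ℕ) : ℕ :=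
  ∑ j ∈ Finset.range i, if Even (G.degree (C.getVert (j + 1))) then 1 else 0

lemma cnt_pos (C : G.Walk x x) (i : ℕ) (hi : i ≠ 0) :
    cnt C i = cnt C (i - 1) + if Even (G.degree (C.getVert i)) then 1 else 0 := by
  obtain ⟨m, rfl⟩ := Nat.exists_eq_succ_of_ne_zero hi
  exact Finset.sum_range_succ _ _

lemma cnt_total {C : G.Walk x x} (hC : C.IsCycle)
    (h : ∀ v ∈ C.support, Even (G.degree v) → G.degree v = 2) :
    (C.support.toFinset.filter (fun v => G.degree v = 2)).card =
      cnt C (C.length - 1) + if Even (G.degree x) then 1 else 0 := by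
  have h3 := hC.three_le_length
  have h1 : C.support.toFinset.filter (fun v => G.degree v = 2) =
      C.support.toFinset.filter (fun v => Even (G.degree v)) := by
    apply Finset.filter_congr
    intro v hv
    rw [List.mem_toFinset] at hv
    exact ⟨fun h => by rw [h]; decide, h v hv⟩
  rw [h1, Finset.card_filter, sum_support hC (fun v => if Even (G.degree v) then 1 else 0)]
  obtain ⟨m, hm⟩ : ∃ m, C.length = m + 1 := ⟨C.length - 1, by omega⟩
  rw [hm, Finset.sum_range_succ', deg_zero]
  simp [cnt]

lemma two_color (hG : G.Connected) (hUni : G.edgeFinset.card = Fintype.card V)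
    {C : G.Walk x x} (hC : C.IsCycle)
    (h : (Even (G.degree x) ∧ 4 ≤ G.degree x) ∨
      Even (cnt C (C.length - 1) + if Even (G.degree x) then 1 else 0)) :
    ∃ f : Sym2 V → Fin 2, IsOddColoring G f := by
  refine cyc_color hG hUni hC le_rfl (fun i => ⟨cnt C i % 2, Nat.mod_lt _ (by norm_num)⟩) ?_
  intro i hi
  unfold LocalCond cprev
  by_cases h0 : i = 0
  · subst h0
    simp only [if_true]
    rw [deg_zero]
    rcases h with h | h
    · exact Or.inr (Or.inr (Or.inl ⟨h.1, h.2, le_rfl⟩))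
    · have hc0 : cnt C 0 = 0 := by simp [cnt]
      rw [hc0]
      by_cases hx : Even (G.degree x)
      · right; left
        refine ⟨hx, ?_⟩
        rw [if_pos hx, Nat.even_iff] at h
        simp only [ne_eq, Fin.mk.injEq]
        omega
      · left
        refine ⟨Nat.not_even_iff_odd.1 hx, ?_⟩
        rw [if_neg hx, Nat.even_iff] at h
        simp only [Fin.mk.injEq]
        omega
  · rw [if_neg h0]
    have := cnt_pos C i h0
    by_cases hx : Even (G.degree (C.getVert i))
    · right; left
      refine ⟨hx, ?_⟩
      rw [if_pos hx] at this
      simp only [ne_eq, Fin.mk.injEq]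
      omega
    · left
      refine ⟨Nat.not_even_iff_odd.1 hx, ?_⟩
      rw [if_neg hx] at this
      simp only [Fin.mk.injEq]
      omega

lemma three_color (hG : G.Connected) (hUni : G.edgeFinset.card = Fintype.card V)
    {C : G.Walk x x} (hC : C.IsCycle) (hx : Even (G.degree x)) :
    ∃ f : Sym2 V → Fin 3, IsOddColoring G f := by
  have h3 := hC.three_le_length
  refine cyc_color hG hUni hC (by norm_num)
    (fun i => ⟨if i = 0 then 2 else cnt C i % 2, by split_ifs <;> omega⟩) ?_
  intro i hi
  have hd := two_le_degree hC i hi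
  unfold LocalCond cprev
  by_cases h0 : i = 0
  · subst h0
    right; left
    refine ⟨by rwa [deg_zero], ?_⟩
    simp only [ne_eq, Fin.mk.injEq, if_true]
    split_ifs <;> omega
  by_cases h1 : i = 1
  · subst h1
    by_cases hx : Even (G.degree (C.getVert 1))
    · right; left
      refine ⟨hx, ?_⟩
      simp only [ne_eq, Fin.mk.injEq]
      simp
      omega
    · right; right; right
      have ho := Nat.not_even_iff_odd.1 hx
      refine ⟨ho, ?_, le_rfl⟩
      rw [Nat.odd_iff] at ho; omega
  · have := cnt_pos C i h0
    by_cases hx : Even (G.degree (C.getVert i))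
    · right; left
      refine ⟨hx, ?_⟩
      rw [if_pos hx] at this
      simp only [ne_eq, Fin.mk.injEq, if_neg h0]
      split_ifs <;> omega
    · left
      refine ⟨Nat.not_even_iff_odd.1 hx, ?_⟩
      rw [if_neg hx] at this
      simp only [Fin.mk.injEq, if_neg h0]
      split_ifs <;> omega

lemma local_conv (f : Sym2 V → Fin 2) (v : V) (hf : OddAt G f v) (e1 e2 : Sym2 V)
    (h1 : e1 ∈ G.incidenceFinset v) (h2 : e2 ∈ G.incidenceFinset v) (h12 : e1 ≠ e2) :
    (Odd (G.degree v) → f e1 = f e2) ∧ (G.degree v = 2 → f e1 ≠ f e2) := by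
  rw [← card_incidenceFinset_eq_degree]
  constructor
  · intro ho
    by_contra hne
    have p1 : colorCount G f v (f e1) ≠ 0 :=
      Finset.card_ne_zero.2 ⟨e1, by simp [h1]⟩
    have p2 : colorCount G f v (f e2) ≠ 0 :=
      Finset.card_ne_zero.2 ⟨e2, by simp [h2]⟩
    have o1 := (hf (f e1)).resolve_left p1
    have o2 := (hf (f e2)).resolve_left p2
    have hs : colorCount G f v (f e1) + colorCount G f v (f e2) = (G.incidenceFinset v).card := by
      unfold colorCount
      rw [← Finset.card_filter_add_card_filter_not (s := G.incidenceFinset v)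
        (fun e => f e = f e1)]
      congr 2
      apply Finset.filter_congr
      intro e _
      omega
    rw [← hs] at ho
    exact (Nat.not_even_iff_odd.2 ho) (o1.add_odd o2)
  · intro hd heq
    have hcc : colorCount G f v (f e1) = 2 := by
      apply le_antisymm
      · exact (Finset.card_le_card (Finset.filter_subset _ _)).trans hd.le
      · refine (Finset.card_pair h12).symm.le.trans ?_
        apply Finset.card_le_card
        intro e he
        simp only [Finset.mem_insert, Finset.mem_singleton] at he
        rcases he with rfl | rfl <;> simp [h1, h2, heq]
    have := hf (f e1)
    rw [hcc] at this
    revert this; decide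

lemma not_two {C : G.Walk x x} (hC : C.IsCycle) (f : Sym2 V → Fin 2) (hf : IsOddColoring G f)
    (h : ∀ v ∈ C.support, Even (G.degree v) → G.degree v = 2) :
    Even (C.support.toFinset.filter (fun v => G.degree v = 2)).card := by
  have h3 := hC.three_le_length
  rw [cnt_total hC h]
  have key : ∀ i < C.length, ((f (cedge C (cprev C.length i))).val +
      if Even (G.degree (C.getVert i)) then 1 else 0) % 2 = (f (cedge C i)).val := by
    intro i hi
    have hl := local_conv f (C.getVert i) (hf _) _ _ (cedge_prev_mem C i hi) (cedge_mem C i hi)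
      (cedge_prev_ne hC i hi)
    split_ifs with he
    · have := hl.2 (h _ ((mem_support_iff_lt hC _).2 ⟨i, hi, rfl⟩) he)
      omega
    · have := hl.1 (Nat.not_even_iff_odd.1 he)
      omega
  have ind : ∀ i < C.length, ((f (cedge C 0)).val + cnt C i) % 2 = (f (cedge C i)).val := by
    intro i
    induction i with
    | zero => intro _; simp [cnt]; omega
    | succ i ih =>
      intro hi
      have h1 := key (i + 1) hi
      have h2 := ih (by omega)
      have h4 := cnt_pos C (i + 1) (by omega)
      simp only [cprev, Nat.add_sub_cancel] at h1 h4
      rw [if_neg (by omega)] at h1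
      omega
  have h1 := key 0 (by omega)
  have h2 := ind (C.length - 1) (by omega)
  simp only [cprev, if_true, deg_zero] at h1
  rw [Nat.even_iff]
  omega

end cyc

theorem unicyclic_oddChromIndex_characterization (G : SimpleGraph V) [DecidableRel G.Adj]
    (hG : G.Connected) (hUni : G.edgeFinset.card = Fintype.card V)
    (x : V) (C : G.Walk x x) (hC : C.IsCycle) :
    oddChromIndex G ≤ 3 ∧
      (oddChromIndex G = 3 ↔
        Odd ((C.support.toFinset.filter (fun v => G.degree v = 2)).card) ∧
        (∀ v ∈ C.support, Even (G.degree v) → G.degree v = 2)) := by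
  have up : ∀ k, (∃ f : Sym2 V → Fin k, IsOddColoring G f) → oddChromIndex G ≤ k :=
    fun k hk => Nat.sInf_le hk
  by_cases h2 : ∃ f : Sym2 V → Fin 2, IsOddColoring G f
  · have hle := up 2 h2
    refine ⟨by omega, ⟨fun h => by omega, ?_⟩⟩
    rintro ⟨ho, hall⟩
    obtain ⟨f, hf⟩ := h2
    exact absurd (not_two hC f hf hall) (Nat.not_even_iff_odd.2 ho)
  · have hall : ∀ v ∈ C.support, Even (G.degree v) → G.degree v = 2 := by
      intro v hv he
      by_contra hne
      apply h2
      have hge : 2 ≤ G.degree v := by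
        obtain ⟨i, hi, rfl⟩ := (mem_support_iff_lt hC v).1 hv
        exact two_le_degree hC i hi
      refine two_color hG hUni (hC.rotate hv) (Or.inl ⟨he, ?_⟩)
      rw [Nat.even_iff] at he
      omega
    have hodd : Odd ((C.support.toFinset.filter (fun v => G.degree v = 2)).card) := by
      by_contra hne
      rw [Nat.not_odd_iff_even, cnt_total hC hall] at hne
      exact h2 (two_color hG hUni hC (Or.inr hne))
    have h3 : ∃ f : Sym2 V → Fin 3, IsOddColoring G f := by
      obtain ⟨v, hv⟩ := Finset.card_pos.1 hodd.pos
      rw [Finset.mem_filter, List.mem_toFinset] at hv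
      exact three_color hG hUni (hC.rotate hv.1) (by rw [hv.2]; decide)
    have hle := up 3 h3
    refine ⟨hle, ⟨fun _ => ⟨hodd, hall⟩, fun _ => ?_⟩⟩
    obtain ⟨f, hf⟩ : ∃ f : Sym2 V → Fin (oddChromIndex G), IsOddColoring G f :=
      Nat.sInf_mem (s := {k | ∃ f : Sym2 V → Fin k, IsOddColoring G f}) ⟨3, h3⟩
    by_contra hne
    have hlt : oddChromIndex G ≤ 2 := by omega
    apply h2
    refine ⟨fun e => Fin.castLE hlt (f e), ?_⟩
    intro v i
    by_cases hi : ∃ j, Fin.castLE hlt j = i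
    · obtain ⟨j, rfl⟩ := hi
      have := hf v j
      simpa [colorCount, Fin.ext_iff] using this
    · left
      unfold colorCount
      rw [Finset.card_eq_zero, Finset.filter_eq_empty_iff]
      intro e _ he
      exact hi ⟨f e, he⟩
end

section
/- Let G be a connected subdivision of an odd graph (i.e., every vertex of G has odd degree or degree 2) with χ'_o(G) = 4. Then no vertex of degree 2 in G is a cut-vertex. -/
open SimpleGraph Finset

variable {V : Type*} [Fintype V] [DecidableEq V]

/-- Number of edges of `C` at `w`. -/
def edeg (C : Finset (Sym2 V)) (w : V) : ℕ := (C.filter (fun e => w ∈ e)).card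

/-- Parity of the number of edges of `C` at `w`. -/
def par (C : Finset (Sym2 V)) (w : V) : ZMod 2 := (edeg C w : ZMod 2)

lemma par_eq_sum (C : Finset (Sym2 V)) (w : V) :
    par C w = ∑ e : Sym2 V, if (e ∈ C ∧ w ∈ e) then (1 : ZMod 2) else 0 := by
  rw [Finset.sum_boole]
  unfold par edeg
  congr 2
  ext e; simp

lemma par_symmDiff (C D : Finset (Sym2 V)) (w : V) :
    par (symmDiff C D) w = par C w + par D w := by
  simp only [par_eq_sum, ← Finset.sum_add_distrib]
  refine Finset.sum_congr rfl fun e _ => ?_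
  have h2 : (1 : ZMod 2) + 1 = 0 := by decide
  simp only [Finset.mem_symmDiff]
  by_cases h1 : e ∈ C <;> by_cases h2 : e ∈ D <;> by_cases h3 : w ∈ e <;> simp [h1, h2, h3] <;> decide

lemma sum_mem_edge (e : Sym2 V) (he : ¬ e.IsDiag) :
    (Finset.univ.filter (fun w => w ∈ e)).card = 2 := by
  induction e with
  | h x y =>
    simp only [Sym2.mk_isDiag_iff] at he
    have : (Finset.univ.filter (fun w => w ∈ s(x, y))) = {x, y} := by
      ext w; simp
    rw [this, Finset.card_pair he]

lemma sum_edeg (C : Finset (Sym2 V)) (hC : ∀ e ∈ C, ¬ e.IsDiag) (U : Finset V)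
    (hU : ∀ e ∈ C, ∀ w ∈ e, w ∈ U) :
    ∑ w ∈ U, edeg C w = 2 * C.card := by
  unfold edeg
  simp only [Finset.card_filter]
  rw [Finset.sum_comm, mul_comm, ← smul_eq_mul, ← Finset.sum_const]
  refine Finset.sum_congr rfl fun e he => ?_
  rw [← sum_mem_edge e (hC e he), ← Finset.card_filter]
  congr 1
  ext w
  simp only [Finset.mem_filter, Finset.mem_univ, true_and]
  exact ⟨fun h => h.2, fun h => ⟨hU e he w h, h⟩⟩

/-- `N` contains no nonempty even subset. -/
def EvenFree (N : Finset (Sym2 V)) : Prop :=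
  ∀ C ⊆ N, (∀ w, par C w = 0) → C = ∅

lemma exists_leaf (N : Finset (Sym2 V)) (hd : ∀ e ∈ N, ¬ e.IsDiag) (hN : EvenFree N)
    (hne : N.Nonempty) : ∃ u, edeg N u = 1 := by
  by_contra! hno
  set U : Finset V := Finset.univ.filter (fun w => edeg N w ≠ 0) with hUdef
  have hU : ∀ e ∈ N, ∀ w ∈ e, w ∈ U := by
    intro e he w hw
    simp only [hUdef, Finset.mem_filter, Finset.mem_univ, true_and, edeg, ne_eq,
      Finset.card_eq_zero]
    intro h
    have : e ∈ N.filter (fun e => w ∈ e) := by simp [he, hw]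
    rw [h] at this
    simp at this
  have hsum := sum_edeg N hd U hU
  have hge : 2 * U.card ≤ 2 * N.card := by
    rw [← hsum, mul_comm, ← smul_eq_mul, ← Finset.sum_const]
    refine Finset.sum_le_sum fun w hw => ?_
    have h0 : edeg N w ≠ 0 := by simpa [hUdef] using hw
    have h1 := hno w
    omega
  -- the odd-vertex map
  let φ : Finset (Sym2 V) → Finset V := fun C => U.filter (fun w => par C w = 1)
  have hz : ∀ z : ZMod 2, z = 0 ∨ z = 1 := by decide
  have hout : ∀ C ⊆ N, ∀ w, w ∉ U → par C w = 0 := by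
    intro C hC w hw
    have : C.filter (fun e => w ∈ e) = ∅ := by
      rw [Finset.filter_eq_empty_iff]
      intro e he hwe
      exact hw (hU e (hC he) w hwe)
    simp [par, edeg, this]
  have hinj : Set.InjOn φ (N.powerset : Set (Finset (Sym2 V))) := by
    intro C hC D hD hCD
    simp only [Finset.coe_powerset, Set.mem_preimage, Set.mem_powerset_iff, Finset.coe_subset]
      at hC hD
    have : symmDiff C D = ∅ := by
      apply hN
      · intro e he
        rw [Finset.mem_symmDiff] at he
        rcases he with h | h
        · exact hC h.1
        · exact hD h.1
      · intro w
        rw [par_symmDiff]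
        by_cases hw : w ∈ U
        · have h1 : w ∈ φ C ↔ w ∈ φ D := by rw [hCD]
          simp only [φ, Finset.mem_filter, hw, true_and] at h1
          rcases hz (par C w) with h | h <;> rcases hz (par D w) with h' | h' <;>
            simp_all <;> decide
        · rw [hout C hC w hw, hout D hD w hw]; simp
    rwa [← Finset.bot_eq_empty, symmDiff_eq_bot] at this
  obtain ⟨e0, he0⟩ := hne
  have hUne : ∃ w0, w0 ∈ U := by
    induction e0 with
    | h x y => exact ⟨x, hU _ he0 x (by simp)⟩
  obtain ⟨w0, hw0⟩ := hUne
  have himg : N.powerset.image φ ⊂ U.powerset := by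
    rw [Finset.ssubset_iff_of_subset]
    · refine ⟨{w0}, by simpa using hw0, ?_⟩
      intro h
      obtain ⟨C, hC, hφ⟩ := Finset.mem_image.1 h
      rw [Finset.mem_powerset] at hC
      have hs := sum_edeg C (fun e he => hd e (hC he)) U (fun e he => hU e (hC he))
      have hs2 : ∑ w ∈ U, par C w = 0 := by
        unfold par
        rw [← Nat.cast_sum, hs, Nat.cast_mul]
        have : ((2 : ℕ) : ZMod 2) = 0 := by decide
        rw [this, zero_mul]
      have hs3 : ∑ w ∈ U, par C w = ∑ w ∈ U, if w ∈ φ C then (1 : ZMod 2) else 0 := by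
        refine Finset.sum_congr rfl fun w hw => ?_
        rcases hz (par C w) with h | h <;> simp [φ, h, hw]
      rw [hs3, hφ] at hs2
      simp [hw0] at hs2
    · intro X hX
      obtain ⟨C, hC, rfl⟩ := Finset.mem_image.1 hX
      simp [φ]
  have hlt := Finset.card_lt_card himg
  rw [Finset.card_image_of_injOn hinj, Finset.card_powerset, Finset.card_powerset] at hlt
  have := (Nat.pow_lt_pow_iff_right (by norm_num : 1 < 2)).1 hlt
  omega

lemma forest_color : ∀ (n : ℕ) (N : Finset (Sym2 V)), N.card = n → (∀ e ∈ N, ¬ e.IsDiag) →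
    EvenFree N → ∀ S P : V → Prop, (∀ w, S w → ¬ P w) → (∀ w, P w → 2 ≤ edeg N w) →
    ∃ g : Sym2 V → Bool,
      (∀ w, S w → ∀ e ∈ N, ∀ e' ∈ N, w ∈ e → w ∈ e' → g e = g e') ∧
      (∀ w, P w → par (N.filter (fun e => g e = true)) w = 1) := by
  intro n
  induction n with
  | zero =>
    intro N hcard _ _ S P _ hP
    rw [Finset.card_eq_zero] at hcard
    subst hcard
    refine ⟨fun _ => true, by simp, ?_⟩
    intro w hw
    have := hP w hw
    simp [edeg] at this
  | succ n ih =>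
    intro N hcard hd hN S P hSP hP
    have hne : N.Nonempty := by rw [← Finset.card_pos]; omega
    obtain ⟨u, hu⟩ := exists_leaf N hd hN hne
    obtain ⟨e0, he0⟩ := Finset.card_eq_one.1 hu
    have he0' : ∀ e, (e ∈ N ∧ u ∈ e) ↔ e = e0 := by
      intro e
      have : e ∈ N.filter (fun e => u ∈ e) ↔ e ∈ ({e0} : Finset (Sym2 V)) := by rw [he0]
      simpa using this
    obtain ⟨he0N, hue0⟩ := (he0' e0).2 rfl
    obtain ⟨w, rfl⟩ := Sym2.mem_iff_exists.1 hue0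
    have huP : ¬ P u := fun h => by have := hP u h; omega
    have hdeg : ∀ z, z ≠ u → z ≠ w → edeg (N.erase s(u, w)) z = edeg N z := by
      intro z h1 h2
      unfold edeg
      congr 1
      ext e
      simp only [Finset.mem_filter, Finset.mem_erase]
      constructor
      · rintro ⟨⟨_, h⟩, h'⟩; exact ⟨h, h'⟩
      · rintro ⟨h, h'⟩
        refine ⟨⟨?_, h⟩, h'⟩
        rintro rfl
        simp [h1, h2] at h'
    obtain ⟨g, hgS, hgP⟩ := ih (N.erase s(u, w)) (by rw [Finset.card_erase_of_mem he0N]; omega)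
      (fun e he => hd e (Finset.mem_of_mem_erase he))
      (fun C hC => hN C (hC.trans (Finset.erase_subset _ _))) S (fun z => P z ∧ z ≠ w)
      (fun z hz h => hSP z hz h.1)
      (fun z hz => by
        have hzu : z ≠ u := fun h => huP (h ▸ hz.1)
        rw [hdeg z hzu hz.2]; exact hP z hz.1)
    -- general extension fact
    have key : ∀ c : Bool,
        ((S w → ∀ e ∈ N, e ≠ s(u, w) → w ∈ e → g e = c)) →
        (P w → par (N.filter (fun e => Function.update g s(u, w) c e = true)) w = 1) →
        ∃ g : Sym2 V → Bool,
      (∀ w, S w → ∀ e ∈ N, ∀ e' ∈ N, w ∈ e → w ∈ e' → g e = g e') ∧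
      (∀ w, P w → par (N.filter (fun e => g e = true)) w = 1) := by
      intro c hc1 hc2
      refine ⟨Function.update g s(u, w) c, ?_, ?_⟩
      · intro z hz e he e' he' hze hze'
        by_cases h1 : e = s(u, w) <;> by_cases h2 : e' = s(u, w)
        · rw [h1, h2]
        · rw [h1, Function.update_self, Function.update_of_ne h2]
          rw [h1, Sym2.mem_iff] at hze
          rcases hze with rfl | rfl
          · exact absurd ((he0' e').1 ⟨he', hze'⟩) h2
          · exact (hc1 hz e' he' h2 hze').symm
        · rw [h2, Function.update_self, Function.update_of_ne h1]
          rw [h2, Sym2.mem_iff] at hze'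
          rcases hze' with rfl | rfl
          · exact absurd ((he0' e).1 ⟨he, hze⟩) h1
          · exact (hc1 hz e he h1 hze)
        · rw [Function.update_of_ne h1, Function.update_of_ne h2]
          exact hgS z hz e (Finset.mem_erase.2 ⟨h1, he⟩) e' (Finset.mem_erase.2 ⟨h2, he'⟩) hze hze'
      · intro z hz
        by_cases hzw : z = w
        · subst hzw; exact hc2 hz
        · have hzu : z ≠ u := fun h => huP (h ▸ hz)
          rw [← hgP z ⟨hz, hzw⟩]
          unfold par edeg
          congr 2
          ext e
          simp only [Finset.mem_filter, Finset.mem_erase]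
          by_cases he : e = s(u, w)
          · subst he; simp [hzw, hzu]
          · simp [he]
    by_cases hPw : P w
    · have hnS : ¬ S w := fun h => hSP w h hPw
      by_cases hpar : par (N.filter (fun e => Function.update g s(u, w) false e = true)) w = 1
      · exact key false (fun h => absurd h hnS) (fun _ => hpar)
      · refine key true (fun h => absurd h hnS) (fun _ => ?_)
        have h0 : par (N.filter (fun e => Function.update g s(u, w) false e = true)) w = 0 := by
          have hz : ∀ z : ZMod 2, z = 0 ∨ z = 1 := by decide
          exact (hz _).resolve_right hpar
        have hsd : N.filter (fun e => Function.update g s(u, w) true e = true) =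
            symmDiff (N.filter (fun e => Function.update g s(u, w) false e = true))
              {s(u, w)} := by
          ext e
          simp only [Finset.mem_symmDiff, Finset.mem_filter, Finset.mem_singleton]
          by_cases he : e = s(u, w)
          · subst he; simp [he0N]
          · simp [he]
        rw [hsd, par_symmDiff, h0]
        simp [par, edeg, Finset.filter_singleton]
    · by_cases hex : ∃ e1 ∈ N, e1 ≠ s(u, w) ∧ w ∈ e1
      · obtain ⟨e1, h1, h2, h3⟩ := hex
        refine key (g e1) (fun hS e he hne hwe => ?_) (fun h => absurd h hPw)
        exact hgS w hS e (Finset.mem_erase.2 ⟨hne, he⟩) e1 (Finset.mem_erase.2 ⟨h2, h1⟩) hwe h3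
      · refine key true (fun hS e he hne hwe => ?_) (fun h => absurd h hPw)
        exact absurd ⟨e, he, hne, hwe⟩ hex

lemma exists_join_pair (G : SimpleGraph V) [DecidableRel G.Adj] (x y : V) (p : G.Walk x y) :
    ∃ C ⊆ G.edgeFinset, ∀ w, par C w = (if w = x then 1 else 0) + (if w = y then 1 else 0) := by
  have h2 : (1 : ZMod 2) + 1 = 0 := by decide
  induction p with
  | nil =>
    refine ⟨∅, by simp, fun w => ?_⟩
    split_ifs <;> simp [par, edeg, h2]
  | @cons a b c h p ih =>
    obtain ⟨C, hC, hp⟩ := ih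
    refine ⟨symmDiff C {s(a, b)}, ?_, fun w => ?_⟩
    · intro e he
      rw [Finset.mem_symmDiff] at he
      rcases he with h' | h'
      · exact hC h'.1
      · have := Finset.mem_singleton.1 h'.1
        subst this
        simpa using h
    · rw [par_symmDiff, hp]
      have hab : a ≠ b := h.ne
      by_cases h1 : w = a <;> by_cases h3 : w = b <;> by_cases h4 : w = c <;>
        simp [par, edeg, Finset.filter_singleton, h1, h3, h4] <;> simp_all

lemma exists_join (G : SimpleGraph V) [DecidableRel G.Adj] (hG : G.Connected) (v : V)
    (X : Finset V) (hX : v ∉ X) :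
    ∃ C ⊆ G.edgeFinset, ∀ w, w ≠ v → par C w = if w ∈ X then 1 else 0 := by
  induction X using Finset.induction_on with
  | empty => exact ⟨∅, by simp, fun w _ => by simp [par, edeg]⟩
  | insert x X hx ih =>
    obtain ⟨C, hC, hp⟩ := ih (fun h => hX (Finset.mem_insert_of_mem h))
    obtain ⟨p⟩ := hG.preconnected x v
    obtain ⟨D, hD, hq⟩ := exists_join_pair G x v p
    refine ⟨symmDiff C D, ?_, fun w hw => ?_⟩
    · intro e he
      rw [Finset.mem_symmDiff] at he
      rcases he with h' | h'
      · exact hC h'.1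
      · exact hD h'.1
    · rw [par_symmDiff, hp w hw, hq]
      by_cases h1 : w = x
      · subst h1; simp [hx, hw]
      · simp [h1, hw]

lemma exists_good_join (G : SimpleGraph V) [DecidableRel G.Adj] (hG : G.Connected) (v : V) :
    ∃ H ⊆ G.edgeFinset, (∀ w, w ≠ v → par H w = 1) ∧ EvenFree (G.edgeFinset \ H) := by
  classical
  let F := G.edgeFinset.powerset.filter (fun H => ∀ w, w ≠ v → par H w = 1)
  have hF : F.Nonempty := by
    obtain ⟨C, hC, hp⟩ := exists_join G hG v (Finset.univ.erase v) (by simp)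
    refine ⟨C, ?_⟩
    simp only [F, Finset.mem_filter, Finset.mem_powerset]
    exact ⟨hC, fun w hw => by rw [hp w hw]; simp [hw]⟩
  obtain ⟨H, hH, hmax⟩ := Finset.exists_max_image F Finset.card hF
  simp only [F, Finset.mem_filter, Finset.mem_powerset] at hH hmax
  refine ⟨H, hH.1, hH.2, fun C hC hev => ?_⟩
  have hdis : Disjoint H C := by
    rw [Finset.disjoint_left]
    intro e he he'
    exact (Finset.mem_sdiff.1 (hC he')).2 he
  have h1 := hmax (symmDiff H C) ⟨by
    intro e he
    rw [Finset.mem_symmDiff] at he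
    rcases he with h' | h'
    · exact hH.1 h'.1
    · exact (Finset.mem_sdiff.1 (hC h'.1)).1, fun w hw => by
      rw [par_symmDiff, hev, hH.2 w hw, add_zero]⟩
  have h2 : symmDiff H C = H ∪ C := by
    rw [hdis.symmDiff_eq_sup]; rfl
  rw [h2, Finset.card_union_of_disjoint hdis] at h1
  rw [← Finset.card_eq_zero]
  omega

lemma colorCount_eq (G : SimpleGraph V) [DecidableRel G.Adj] {k : ℕ}
    (f : Sym2 V → Fin k) (v : V) (i : Fin k) :
    colorCount G f v i = edeg (G.edgeFinset.filter (fun e => f e = i)) v := by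
  unfold colorCount edeg
  rw [G.incidenceFinset_eq_filter, Finset.filter_filter, Finset.filter_filter]
  congr 1
  ext e; simp only [Finset.mem_filter]; tauto

/-- A 3-coloring that is odd at all vertices except `v`, where it may fail only
because color 0 occurs an even number of times. -/
lemma exists_almost (G : SimpleGraph V) [DecidableRel G.Adj] (hG : G.Connected) (v : V) :
    ∃ f : Sym2 V → Fin 3, (∀ w, w ≠ v → OddAt G f w) ∧
      ∀ i, i ≠ 0 → colorCount G f v i = 0 ∨ Odd (colorCount G f v i) := by
  obtain ⟨H, hHE, hodd, hfree⟩ := exists_good_join G hG v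
  set N := G.edgeFinset \ H with hNdef
  have hNE : ∀ e ∈ N, e ∈ G.edgeFinset := fun e he => (Finset.mem_sdiff.1 he).1
  have hd : ∀ e ∈ N, ¬ e.IsDiag := fun e he =>
    G.not_isDiag_of_mem_edgeSet (by simpa using hNE e he)
  obtain ⟨g, hgS, hgP⟩ := forest_color _ N rfl hd hfree (fun w => Odd (edeg N w))
    (fun w => Even (edeg N w) ∧ edeg N w ≠ 0)
    (fun w h h' => (Nat.not_even_iff_odd.2 h) h'.1)
    (fun w h => by
      obtain ⟨⟨k, hk⟩, h0⟩ := h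
      omega)
  let f : Sym2 V → Fin 3 := fun e => if e ∈ H then 0 else if g e = true then 1 else 2
  have h0 : ∀ w, colorCount G f w 0 = edeg H w := by
    intro w
    rw [colorCount_eq]
    congr 1
    ext e
    simp only [Finset.mem_filter, f]
    constructor
    · rintro ⟨_, h⟩
      by_contra hc
      rw [if_neg hc] at h
      split_ifs at h <;> simp at h
    · intro h; exact ⟨hHE h, by simp [h]⟩
  have h1 : ∀ w, colorCount G f w 1 = edeg (N.filter (fun e => g e = true)) w := by
    intro w
    rw [colorCount_eq]
    congr 1
    ext e
    simp only [Finset.mem_filter, f, hNdef, Finset.mem_sdiff]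
    by_cases hh : e ∈ H <;> by_cases hg : g e = true <;> simp [hh, hg]
  have h2 : ∀ w, colorCount G f w 2 = edeg (N.filter (fun e => ¬ g e = true)) w := by
    intro w
    rw [colorCount_eq]
    congr 1
    ext e
    simp only [Finset.mem_filter, f, hNdef, Finset.mem_sdiff]
    by_cases hh : e ∈ H <;> by_cases hg : g e = true <;> simp [hh, hg]
  have h12 : ∀ w, edeg (N.filter (fun e => g e = true)) w +
      edeg (N.filter (fun e => ¬ g e = true)) w = edeg N w := by
    intro w
    unfold edeg
    rw [← Finset.card_filter_add_card_filter_not (s := N.filter (fun e => w ∈ e))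
      (fun e => g e = true)]
    congr 2
    · ext e; simp only [Finset.mem_filter]; tauto
    · ext e; simp only [Finset.mem_filter]; tauto
  have hmain : ∀ w, (colorCount G f w 1 = 0 ∨ Odd (colorCount G f w 1)) ∧
      (colorCount G f w 2 = 0 ∨ Odd (colorCount G f w 2)) := by
    intro w
    rw [h1, h2]
    have hs := h12 w
    rcases Nat.even_or_odd (edeg N w) with hev | hod
    · by_cases hz : edeg N w = 0
      · constructor <;> left <;> omega
      · have hp : Odd (edeg (N.filter (fun e => g e = true)) w) :=
          ZMod.natCast_eq_one_iff_odd.1 (hgP w ⟨hev, hz⟩)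
        refine ⟨Or.inr hp, Or.inr ?_⟩
        obtain ⟨a, ha⟩ := hev
        obtain ⟨b, hb⟩ := hp
        exact ⟨a - b - 1, by omega⟩
    · have hall := hgS w hod
      by_cases hz : edeg (N.filter (fun e => g e = true)) w = 0
      · rw [hz, zero_add] at hs
        exact ⟨Or.inl hz, Or.inr (hs ▸ hod)⟩
      · have hz2 : edeg (N.filter (fun e => ¬ g e = true)) w = 0 := by
          unfold edeg at hz ⊢
          obtain ⟨e, he⟩ := Finset.card_pos.1 (Nat.pos_of_ne_zero hz)
          simp only [Finset.mem_filter] at he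
          rw [Finset.card_eq_zero, Finset.filter_eq_empty_iff]
          intro e' he' hw
          simp only [Finset.mem_filter] at he'
          exact he'.2 ((hall e' he'.1 e he.1.1 hw he.2).trans he.1.2)
        rw [hz2, add_zero] at hs
        exact ⟨Or.inr (hs ▸ hod), Or.inl hz2⟩
  refine ⟨f, ?_, ?_⟩
  · intro w hw i
    fin_cases i
    · right
      have := ZMod.natCast_eq_one_iff_odd.1 (hodd w hw)
      simpa [h0] using this
    · exact (hmain w).1
    · exact (hmain w).2
  · intro i hi
    fin_cases i
    · simp at hi
    · exact (hmain v).1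
    · exact (hmain v).2

lemma closed_univ (G : SimpleGraph V) (hG : G.Connected) (A : V → Prop)
    (hA : ∀ x y, A x → G.Adj x y → A y) (x y : V) (hx : A x) : A y := by
  obtain ⟨p⟩ := hG.preconnected x y
  induction p with
  | nil => exact hx
  | cons h p ih => exact ih (hA _ _ hx h)

theorem degree_two_not_cutvertex (G : SimpleGraph V) [DecidableRel G.Adj]
    (hG : G.Connected) (hsub : ∀ v : V, Odd (G.degree v) ∨ G.degree v = 2)
    (hchi : oddChromIndex G = 4) :
    ∀ v : V, G.degree v = 2 → (G.induce ({v}ᶜ : Set V)).Connected := by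
  classical
  intro v hv
  by_contra hcon
  suffices h : ∃ f : Sym2 V → Fin 3, IsOddColoring G f by
    have : oddChromIndex G ≤ 3 := Nat.sInf_le h
    omega
  obtain ⟨f, hf, hfv⟩ := exists_almost G hG v
  have hle : ∀ (f : Sym2 V → Fin 3) i, colorCount G f v i ≤ 2 := by
    intro f i
    rw [← hv, ← G.card_incidenceFinset_eq_degree]
    exact Finset.card_filter_le _ _
  by_cases h0 : colorCount G f v 0 = 2
  swap
  · refine ⟨f, fun w => ?_⟩
    by_cases hw : w = v
    · subst hw
      intro i
      by_cases hi : i = 0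
      · subst hi
        have := hle f 0
        have h01 : colorCount G f w 0 = 0 ∨ colorCount G f w 0 = 1 := by omega
        rcases h01 with h | h
        · exact Or.inl h
        · exact Or.inr (by rw [h]; exact odd_one)
      · exact hfv i hi
    · exact hf w hw
  -- all edges at v have color 0
  have hall : ∀ e ∈ G.incidenceFinset v, f e = 0 := by
    have : (G.incidenceFinset v).filter (fun e => f e = 0) = G.incidenceFinset v := by
      apply Finset.eq_of_subset_of_card_le (Finset.filter_subset _ _)
      rw [G.card_incidenceFinset_eq_degree, hv]
      exact h0.ge
    intro e he
    rw [← this] at he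
    exact (Finset.mem_filter.1 he).2
  -- the two sides
  have hnb : ∃ a, G.Adj v a := by
    have : 0 < G.degree v := by omega
    rwa [G.degree_pos_iff_exists_adj] at this
  obtain ⟨a0, ha0⟩ := hnb
  have hnp : ¬ (G.induce ({v}ᶜ : Set V)).Preconnected := by
    intro h
    haveI : Nonempty ({v}ᶜ : Set V) := ⟨⟨a0, by simpa using ha0.ne'⟩⟩
    exact hcon ⟨h⟩
  unfold SimpleGraph.Preconnected at hnp
  push Not at hnp
  obtain ⟨x0, y0, hxy⟩ := hnp
  let A : V → Prop := fun z => ∃ hz : z ∈ ({v}ᶜ : Set V),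
    (G.induce ({v}ᶜ : Set V)).Reachable x0 ⟨z, hz⟩
  have hAv : ¬ A v := fun ⟨h, _⟩ => by simp at h
  have hAx : A x0 := ⟨x0.2, SimpleGraph.Reachable.refl _⟩
  have hAy : ¬ A y0 := fun ⟨_, h⟩ => hxy h
  have hstep : ∀ x y, A x → G.Adj x y → y ≠ v → A y := by
    rintro x y ⟨hx, hr⟩ hadj hy
    refine ⟨by simpa using hy, hr.trans ?_⟩
    apply SimpleGraph.Adj.reachable
    simpa using hadj
  have hin : ∃ a, G.Adj v a ∧ A a := by
    by_contra! hno
    refine hAv (closed_univ G hG A ?_ x0 v hAx)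
    intro x y hx hadj
    refine hstep x y hx hadj ?_
    rintro rfl
    exact hno x hadj.symm hx
  have hout : ∃ b, G.Adj v b ∧ ¬ A b := by
    by_contra! hno
    have := closed_univ G hG (fun z => A z ∨ z = v) ?_ x0 y0 (Or.inl hAx)
    · rcases this with h | h
      · exact hAy h
      · exact y0.2 (by simpa using h)
    · rintro x y (hx | rfl) hadj
      · by_cases hy : y = v
        · exact Or.inr hy
        · exact Or.inl (hstep x y hx hadj hy)
      · exact Or.inl (hno y hadj)
  obtain ⟨a, hva, hAa⟩ := hin
  obtain ⟨b, hvb, hAb⟩ := hout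
  let f' : Sym2 V → Fin 3 := fun e => if ∃ x, A x ∧ x ∈ e then Equiv.swap 0 1 (f e) else f e
  refine ⟨f', fun w => ?_⟩
  by_cases hw : w = v
  · subst hw
    intro i
    have hi2 : colorCount G f' w i ≠ 2 := by
      intro h2
      have hall' : (G.incidenceFinset w).filter (fun e => f' e = i) = G.incidenceFinset w := by
        apply Finset.eq_of_subset_of_card_le (Finset.filter_subset _ _)
        rw [G.card_incidenceFinset_eq_degree, hv]
        exact h2.ge
      have hma : s(w, a) ∈ G.incidenceFinset w := by
        simpa [SimpleGraph.mem_incidenceFinset] using hva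
      have hmb : s(w, b) ∈ G.incidenceFinset w := by
        simpa [SimpleGraph.mem_incidenceFinset] using hvb
      have hfa : f' s(w, a) = 1 := by
        have : ∃ x, A x ∧ x ∈ s(w, a) := ⟨a, hAa, by simp⟩
        simp only [f', if_pos this, hall _ hma]
        simp
      have hfb : f' s(w, b) = 0 := by
        have : ¬ ∃ x, A x ∧ x ∈ s(w, b) := by
          rintro ⟨x, hx, hm⟩
          rcases Sym2.mem_iff.1 hm with rfl | rfl
          · exact hAv hx
          · exact hAb hx
        simp only [f', if_neg this, hall _ hmb]
      rw [← hall'] at hma hmb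
      have e1 := (Finset.mem_filter.1 hma).2
      have e2 := (Finset.mem_filter.1 hmb).2
      rw [hfa] at e1
      rw [hfb, ← e1] at e2
      simp at e2
    have := hle f' i
    have h01 : colorCount G f' w i = 0 ∨ colorCount G f' w i = 1 := by omega
    rcases h01 with h | h
    · exact Or.inl h
    · exact Or.inr (by rw [h]; exact odd_one)
  · by_cases hAw : A w
    · intro i
      have : colorCount G f' w i = colorCount G f w (Equiv.swap 0 1 i) := by
        unfold colorCount
        congr 1
        refine Finset.filter_congr fun e he => ?_
        have hwe : w ∈ e := by
          rw [G.mem_incidenceFinset] at he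
          exact he.2
        have : ∃ x, A x ∧ x ∈ e := ⟨w, hAw, hwe⟩
        simp only [f', if_pos this]
        rw [Equiv.swap_apply_eq_iff]
      rw [this]
      exact hf w hw _
    · intro i
      have : colorCount G f' w i = colorCount G f w i := by
        unfold colorCount
        congr 1
        refine Finset.filter_congr fun e he => ?_
        have : ¬ ∃ x, A x ∧ x ∈ e := by
          rintro ⟨x, hx, hxe⟩
          rw [G.mem_incidenceFinset] at he
          have hne : x ≠ w := fun h => hAw (h ▸ hx)
          have hee : e = s(x, w) := (Sym2.mem_and_mem_iff hne).1 ⟨hxe, he.2⟩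
          have hadj : G.Adj x w := by
            have := he.1
            rw [hee] at this
            simpa using this
          exact hAw (hstep x w hx hadj hw)
        simp only [f', if_neg this]
      rw [this]
      exact hf w hw _
end

section
/- Let G be a connected subdivision of an odd graph with χ'_o(G) = 4. Then no two vertices of degree 2 in G are adjacent. -/
open SimpleGraph Finset

variable {V : Type*} [Fintype V] [DecidableEq V]

/-- Parent function of a breadth-first tree. -/
lemma exists_parent_aux {V : Type*} (G : SimpleGraph V) (hG : G.Connected) (r : V) :
    ∃ p : V → V, ∀ w, w ≠ r → G.Adj w (p w) ∧ G.dist w r = G.dist (p w) r + 1 := by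
  have h : ∀ w, ∃ x, w ≠ r → G.Adj w x ∧ G.dist w r = G.dist x r + 1 := by
    intro w
    by_cases hw : w = r
    · exact ⟨w, fun h => absurd hw h⟩
    obtain ⟨q, hq⟩ := (hG w r).exists_walk_length_eq_dist
    cases q with
    | nil => exact absurd rfl hw
    | @cons _ x _ hadj q =>
      refine ⟨x, fun _ => ⟨hadj, ?_⟩⟩
      have h1 : G.dist x r ≤ q.length := dist_le q
      obtain ⟨q', hq'⟩ := (hG x r).exists_walk_length_eq_dist
      have h2 : G.dist w r ≤ (Walk.cons hadj q').length := dist_le _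
      simp only [Walk.length_cons] at hq h2
      omega
  choose p hp using h
  exact ⟨p, hp⟩

/-- Local extension of a colouring at a vertex. -/
lemma local_choice_aux {V : Type*} [DecidableEq V] (C : Finset V) (P : Prop) [Decidable P]
    (col : Bool) :
    ∃ h : V → Bool, ∀ j, let n := (C.filter (fun w => h w = j)).card +
      (if P ∧ col = j then 1 else 0); n = 0 ∨ Odd n := by
  have key : ∀ b j : Bool, (C.filter (fun _ => b = j)).card = if b = j then C.card else 0 := by
    intro b j
    split_ifs with h <;> simp [h]
  by_cases hP : P
  · rcases Nat.even_or_odd C.card with hc | hc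
    · refine ⟨fun _ => col, fun j => ?_⟩
      simp only [key]
      by_cases hj : col = j
      · right; simpa [hj, hP] using hc.add_one
      · left; simp [hj]
    · refine ⟨fun _ => !col, fun j => ?_⟩
      simp only [key]
      right
      cases col <;> cases j <;> simp [hP, hc]
  · rcases Nat.even_or_odd C.card with hc | hc
    · rcases C.eq_empty_or_nonempty with h0 | ⟨x, hx⟩
      · exact ⟨fun _ => true, fun j => by left; simp [h0, hP]⟩
      · refine ⟨fun w => decide (w = x), fun j => ?_⟩
        right
        cases j
        · have : C.filter (fun w => decide (w = x) = false) = C.erase x := by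
            ext w; simp [and_comm]
          rw [this, card_erase_of_mem hx]
          have := card_pos.mpr ⟨x, hx⟩
          simp only [hP, false_and, if_false, add_zero]
          exact Nat.Even.sub_odd this hc odd_one
        · have : C.filter (fun w => decide (w = x) = true) = {x} := by
            ext w; simp; rintro rfl; exact hx
          rw [this]; simp [hP]
    · refine ⟨fun _ => true, fun j => ?_⟩
      simp only [key]
      cases j
      · left; simp [hP]
      · right; simp [hP, hc]

lemma tree_aux {V : Type*} [Fintype V] [DecidableEq V] (G : SimpleGraph V) [DecidableRel G.Adj]
    (hG : G.Connected) :
    ∃ K : Finset (Sym2 V), K ⊆ G.edgeFinset ∧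
      (∀ T : Finset V, Even T.card → ∃ J ⊆ K, ∀ v, Odd (J.filter (fun e => v ∈ e)).card ↔ v ∈ T) ∧
      (∀ J ⊆ K, ∃ g : Sym2 V → Bool, ∀ (v : V) (j : Bool),
        (J.filter (fun e => v ∈ e ∧ g e = j)).card = 0 ∨
          Odd (J.filter (fun e => v ∈ e ∧ g e = j)).card) := by
  classical
  obtain ⟨r⟩ := hG.nonempty
  obtain ⟨p, hp⟩ := exists_parent_aux G hG r
  have hinj : Set.InjOn (fun w => s(w, p w)) {w | w ≠ r} := by
    intro a ha b hb hab
    simp only [Sym2.eq_iff] at hab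
    rcases hab with h | ⟨h1, h2⟩
    · exact h.1
    · have h3 := (hp a ha).2
      have h4 := (hp b hb).2
      rw [h2] at h3
      rw [← h1] at h4
      omega
  set K : Finset (Sym2 V) := (univ.filter (fun w => w ≠ r)).image (fun w => s(w, p w)) with hK
  have hKm : ∀ w, w ≠ r → s(w, p w) ∈ K := fun w hw =>
    mem_image.mpr ⟨w, by simpa using hw, rfl⟩
  refine ⟨K, ?_, ?_, ?_⟩
  · intro e he
    obtain ⟨w, hw, rfl⟩ := mem_image.mp he
    simp only [mem_filter, mem_univ, true_and] at hw
    simpa using (hp w hw).1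
  · intro T hT
    let R : (V → ZMod 2) → Prop := fun t => ∃ x : Sym2 V → ZMod 2,
      ∀ v, t v = ∑ e ∈ K.filter (fun e => v ∈ e), x e
    have R0 : R 0 := ⟨0, fun v => by simp⟩
    have Radd : ∀ s t, R s → R t → R (s + t) := by
      rintro s t ⟨x, hx⟩ ⟨y, hy⟩
      exact ⟨x + y, fun v => by simp [hx, hy, sum_add_distrib]⟩
    let δ : V → V → ZMod 2 := fun a v => if v = a then 1 else 0
    have two : ∀ z : ZMod 2, z + z = 0 := by decide
    have Rroot : ∀ n a, G.dist a r = n → R (δ a + δ r) := by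
      intro n
      induction n with
      | zero =>
        intro a ha
        have : a = r := (hG a r).dist_eq_zero_iff.mp ha
        subst this
        convert R0
        funext v
        exact two _
      | succ n ih =>
        intro a ha
        have har : a ≠ r := by rintro rfl; simp at ha
        obtain ⟨h1, h2⟩ := hp a har
        have h3 := ih (p a) (by omega)
        have h4 : R (δ a + δ (p a)) := by
          refine ⟨fun e => if e = s(a, p a) then 1 else 0, fun v => ?_⟩
          rw [sum_ite_eq']
          have hne := h1.ne
          simp only [mem_filter, hKm a har, true_and, Sym2.mem_iff, δ, Pi.add_apply]
          by_cases hv : v = a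
          · subst hv; simp [hne]
          · simp [hv]
        convert Radd _ _ h4 h3 using 1
        funext v
        simp only [Pi.add_apply]
        linear_combination (-1 : ZMod 2) * two (δ (p a) v)
    have Rsum : ∀ S : Finset V, R (∑ a ∈ S, (δ a + δ r)) := by
      intro S
      induction S using Finset.induction_on with
      | empty => simpa using R0
      | insert a S ha ih =>
        rw [sum_insert ha]
        exact Radd _ _ (Rroot _ a rfl) ih
    obtain ⟨x, hx⟩ := Rsum T
    refine ⟨K.filter (fun e => x e ≠ 0), filter_subset _ _, fun v => ?_⟩
    have h := hx v
    have hx01 : ∀ z : ZMod 2, z = if z ≠ 0 then 1 else 0 := by decide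
    have h5 : (∑ e ∈ K.filter (fun e => v ∈ e), x e) =
        (((K.filter (fun e => x e ≠ 0)).filter (fun e => v ∈ e)).card : ZMod 2) := by
      rw [sum_congr rfl (fun e _ => hx01 (x e)), sum_boole, filter_filter, filter_filter]
      congr 3
      ext e
      simp [and_comm]
    have h6 : (∑ a ∈ T, (δ a + δ r)) v = if v ∈ T then 1 else 0 := by
      rw [sum_add_distrib]
      simp only [Pi.add_apply, sum_const, Finset.sum_apply, δ, sum_ite_eq, nsmul_eq_mul]
      have : (T.card : ZMod 2) = 0 := (ZMod.natCast_eq_zero_iff_even).mpr hT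
      have h7 : ((T.card : V → ZMod 2)) = 0 := by
        funext y; simpa using this
      rw [h7]; simp
    rw [h6, h5] at h
    rw [← ZMod.natCast_eq_one_iff_odd, ← h]
    split_ifs with hv <;> simp [hv]
  · intro J hJ
    let A : Finset V := univ.filter (fun w => w ≠ r ∧ s(w, p w) ∈ J)
    have hA : ∀ w, w ∈ A ↔ w ≠ r ∧ s(w, p w) ∈ J := by intro w; simp [A]
    have hloc : ∀ (v : V) (col : Bool), ∃ h : V → Bool, ∀ j : Bool,
        ((A.filter (fun w => p w = v)).filter (fun w => h w = j)).card +
          (if v ∈ A ∧ col = j then 1 else 0) = 0 ∨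
        Odd (((A.filter (fun w => p w = v)).filter (fun w => h w = j)).card +
          (if v ∈ A ∧ col = j then 1 else 0)) := fun v col =>
      local_choice_aux (A.filter (fun w => p w = v)) (v ∈ A) col
    choose g hg using hloc
    let cn : ℕ → V → Bool := fun n => Nat.rec (motive := fun _ => V → Bool) (fun _ => true) (fun _ c w => g (p w) (c (p w)) w) n
    let c : V → Bool := fun w => cn (G.dist w r) w
    have hc : ∀ w, w ≠ r → c w = g (p w) (c (p w)) w := by
      intro w hw
      change cn (G.dist w r) w = g (p w) (cn (G.dist (p w) r) (p w)) w
      rw [(hp w hw).2]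
    have hJA : J = A.image (fun w => s(w, p w)) := by
      ext e
      constructor
      · intro he
        obtain ⟨w, hw, rfl⟩ := mem_image.mp (hJ he)
        exact mem_image.mpr ⟨w, (hA w).mpr ⟨by simpa using hw, he⟩, rfl⟩
      · intro he
        obtain ⟨w, hw, rfl⟩ := mem_image.mp he
        exact ((hA w).mp hw).2
    have : Nonempty V := ⟨r⟩
    let ψ := Function.invFunOn (fun w => s(w, p w)) {w | w ≠ r}
    have hψ : ∀ w, w ≠ r → ψ s(w, p w) = w := fun w hw =>
      hinj.leftInvOn_invFunOn (x := w) hw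
    refine ⟨fun e => c (ψ e), fun (v : V) (j : Bool) => ?_⟩
    have hcard : (J.filter (fun e => v ∈ e ∧ c (ψ e) = j)).card =
        ((A.filter (fun w => p w = v)).filter (fun w => g v (c v) w = j)).card +
          (if v ∈ A ∧ c v = j then 1 else 0) := by
      have e1 : J.filter (fun e => v ∈ e ∧ c (ψ e) = j) =
          (A.filter (fun w => (v = w ∨ v = p w) ∧ c w = j)).image (fun w => s(w, p w)) := by
        rw [hJA, filter_image]
        congr 1
        apply filter_congr
        intro w hw
        rw [hψ w ((hA w).mp hw).1, Sym2.mem_iff]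
      rw [e1, card_image_of_injOn]
      · have e2 : A.filter (fun w => (v = w ∨ v = p w) ∧ c w = j) =
            ((A.filter (fun w => p w = v)).filter (fun w => g v (c v) w = j)) ∪
              A.filter (fun w => w = v ∧ c v = j) := by
          ext w
          simp only [mem_filter, mem_union]
          constructor
          · rintro ⟨hw, (rfl | rfl), h⟩
            · exact Or.inr ⟨hw, rfl, h⟩
            · exact Or.inl ⟨⟨hw, rfl⟩, by rw [← hc w ((hA w).mp hw).1]; exact h⟩
          · rintro (⟨⟨hw, rfl⟩, h⟩ | ⟨hw, rfl, h⟩)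
            · exact ⟨hw, Or.inr rfl, by rw [hc w ((hA w).mp hw).1]; exact h⟩
            · exact ⟨hw, Or.inl rfl, h⟩
        rw [e2, card_union_of_disjoint]
        · congr 1
          split_ifs with h
          · rw [card_eq_one]
            refine ⟨v, ?_⟩
            ext w
            simp only [mem_filter, mem_singleton]
            constructor
            · exact fun h => h.2.1
            · rintro rfl; exact ⟨h.1, rfl, h.2⟩
          · rw [card_eq_zero, filter_eq_empty_iff]
            rintro w hw ⟨rfl, h'⟩
            exact h ⟨hw, h'⟩
        · rw [Finset.disjoint_left]
          intro w hw hw'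
          simp only [mem_filter] at hw hw'
          have := (hp w ((hA w).mp hw.1.1).1).1.ne
          rw [hw.1.2, hw'.2.1] at this
          exact this rfl
      · intro a ha b hb hab
        simp only [coe_filter, Set.mem_setOf_eq] at ha hb
        exact hinj ((hA a).mp ha.1).1 ((hA b).mp hb.1).1 hab
    have := hg v (c v) j
    rw [← hcard] at this
    exact this

lemma oddAt_two_aux (G : SimpleGraph V) [DecidableRel G.Adj] {k : ℕ} (f : Sym2 V → Fin k)
    (v : V) (e0 e1 : Sym2 V) (h : G.incidenceFinset v = {e0, e1}) (hf : f e0 ≠ f e1) :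
    OddAt G f v := by
  intro i
  unfold colorCount
  rw [h, filter_insert, filter_singleton]
  by_cases h0 : f e0 = i <;> by_cases h1 : f e1 = i
  · exact absurd (h0.trans h1.symm) hf
  all_goals simp [h0, h1]

lemma other_edge_aux (G : SimpleGraph V) [DecidableRel G.Adj] (v : V) (e0 : Sym2 V)
    (he : e0 ∈ G.incidenceFinset v) (hd : G.degree v = 2) :
    ∃ e1, e1 ≠ e0 ∧ G.incidenceFinset v = {e0, e1} := by
  rw [← card_incidenceFinset_eq_degree, card_eq_two] at hd
  obtain ⟨x, y, hxy, h⟩ := hd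
  rw [h] at he ⊢
  simp only [mem_insert, mem_singleton] at he
  rcases he with rfl | rfl
  · exact ⟨y, hxy.symm, rfl⟩
  · exact ⟨x, hxy, pair_comm _ _⟩

theorem degree_two_vertices_nonadjacent (G : SimpleGraph V) [DecidableRel G.Adj]
    (hG : G.Connected) (hsub : ∀ v : V, Odd (G.degree v) ∨ G.degree v = 2)
    (hchi : oddChromIndex G = 4) :
    ∀ u w : V, G.Adj u w → ¬(G.degree u = 2 ∧ G.degree w = 2) := by
  rintro u w huw ⟨hu, hw⟩
  obtain ⟨K, hKG, hK1, hK2⟩ := tree_aux G hG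
  obtain ⟨T, hT, hTv⟩ : ∃ T : Finset V, Even T.card ∧
      ∀ v, v ≠ w → (v ∈ T ↔ Even (G.degree v)) := by
    set S : Finset V := univ.filter (fun v => Even (G.degree v)) with hS
    rcases Nat.even_or_odd S.card with h | h
    · exact ⟨S, h, fun v _ => by simp [hS]⟩
    · refine ⟨S.erase w, ?_, fun v hv => by simp [hS, hv]⟩
      have : w ∈ S := by simp [hS, hw]
      rw [card_erase_of_mem this]
      exact Nat.Odd.sub_odd h odd_one
  obtain ⟨J, hJK, hJ⟩ := hK1 T hT
  obtain ⟨g, hg⟩ := hK2 J hJK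
  let f : Sym2 V → Fin 3 := fun e => if e ∈ J then (if g e = true then 1 else 2) else 0
  have hinc : ∀ v e, e ∈ G.incidenceFinset v ↔ e ∈ G.edgeFinset ∧ v ∈ e := by
    intro v e
    simp [incidenceSet]
  have hJi : ∀ v, J.filter (fun e => v ∈ e) = (G.incidenceFinset v).filter (fun e => e ∈ J) := by
    intro v
    ext e
    simp only [mem_filter, hinc]
    exact ⟨fun h => ⟨⟨hKG (hJK h.1), h.2⟩, h.1⟩, fun h => ⟨h.2, h.1.2⟩⟩
  have hJc : ∀ v (i : Fin 3) j, (∀ e, f e = i ↔ e ∈ J ∧ g e = j) →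
      (G.incidenceFinset v).filter (fun e => f e = i) =
      J.filter (fun e => v ∈ e ∧ g e = j) := by
    intro v i j h
    ext e
    simp only [mem_filter, hinc, h]
    exact ⟨fun h => ⟨h.2.1, h.1.2, h.2.2⟩, fun h => ⟨⟨hKG (hJK h.1), h.2.1⟩, h.1, h.2.2⟩⟩
  have hf : ∀ v, v ≠ w → OddAt G f v := by
    intro v hv i
    unfold colorCount
    fin_cases i
    · right
      have h0 : (G.incidenceFinset v).filter (fun e => f e = 0) =
          (G.incidenceFinset v).filter (fun e => ¬ e ∈ J) := by
        apply filter_congr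
        intro e _
        by_cases he : e ∈ J <;> by_cases hge : g e = true <;> simp [f, he, hge]
      have h1 := card_filter_add_card_filter_not (s := G.incidenceFinset v) (fun e => e ∈ J)
      rw [card_incidenceFinset_eq_degree, ← hJi] at h1
      have h2 := hJ v
      rw [hTv v hv] at h2
      change Odd ((G.incidenceFinset v).filter (fun e => f e = 0)).card
      rw [h0]
      rw [← h1] at h2
      grind
    · change ((G.incidenceFinset v).filter (fun e => f e = 1)).card = 0 ∨
        Odd ((G.incidenceFinset v).filter (fun e => f e = 1)).card
      rw [hJc v 1 true]
      · exact hg v true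
      · intro e
        by_cases he : e ∈ J <;> by_cases hge : g e = true <;> simp [f, he, hge]
    · change ((G.incidenceFinset v).filter (fun e => f e = 2)).card = 0 ∨
        Odd ((G.incidenceFinset v).filter (fun e => f e = 2)).card
      rw [hJc v 2 false]
      · exact hg v false
      · intro e
        by_cases he : e ∈ J <;> by_cases hge : g e = true <;> simp [f, he, hge]
  obtain ⟨e1, he1, hI1⟩ := other_edge_aux G u s(u, w) (by simp [hinc, huw]) hu
  obtain ⟨e2, he2, hI2⟩ := other_edge_aux G w s(u, w) (by simp [hinc, huw]) hw
  have hthree : ∀ a b : Fin 3, ∃ c, c ≠ a ∧ c ≠ b := by decide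
  obtain ⟨c0, hc1, hc2⟩ := hthree (f e1) (f e2)
  have hmem : (3 : ℕ) ∈ {k | ∃ f : Sym2 V → Fin k, IsOddColoring G f} := by
    refine ⟨Function.update f s(u, w) c0, fun v => ?_⟩
    by_cases hvu : v = u
    · subst hvu
      exact oddAt_two_aux G _ v _ _ hI1 (by simp [Function.update_of_ne he1, hc1])
    by_cases hvw : v = w
    · subst hvw
      exact oddAt_two_aux G _ v _ _ hI2 (by simp [Function.update_of_ne he2, hc2])
    intro i
    have : colorCount G (Function.update f s(u, w) c0) v i = colorCount G f v i := by
      unfold colorCount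
      congr 1
      apply filter_congr
      intro e he
      rw [Function.update_of_ne]
      rintro rfl
      have := ((hinc v _).mp he).2
      simp [hvu, hvw] at this
    rw [this]
    exact hf v hvw i
  have := Nat.sInf_le hmem
  unfold oddChromIndex at hchi
  omega
end

section
/- Let G be a connected subdivision of an odd graph, let v be a degree-2 vertex of G that is not a cut-vertex, and let e be an edge incident to v. Then G admits an odd edge-coloring with colors {1,2,3,4} where the color class of 4 is contained in {e}. In particular χ'_o(G) ≤ 4. -/
open SimpleGraph Finset

variable {V : Type*} [Fintype V] [DecidableEq V]

theorem aux_coboundary {V : Type*} [Finite V] (h : Sym2 V → ZMod 2) (F : SimpleGraph V)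
    (hF : F.IsAcyclic) : ∃ g : V → ZMod 2, ∀ x y, F.Adj x y → g x + g y = h s(x, y) := by
  classical
  induction F using WellFoundedLT.induction with
  | ind F ih =>
    by_cases hE : ∃ x y, F.Adj x y
    · obtain ⟨x, y, hxy⟩ := hE
      have hbr := (isAcyclic_iff_forall_adj_isBridge.mp hF) hxy
      rw [isBridge_iff] at hbr
      have hle : F.deleteEdges {s(x, y)} ≤ F := deleteEdges_le _
      have hnadj : ¬ (F.deleteEdges {s(x, y)}).Adj x y := by
        simp
      have hlt : F.deleteEdges {s(x, y)} < F :=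
        lt_of_le_of_ne hle (fun hh => hnadj (by rw [hh]; exact hxy))
      obtain ⟨g, hg⟩ := ih _ hlt (hF.anti hle)
      set F' := F.deleteEdges {s(x, y)} with hF'
      refine ⟨fun z => g z + if F'.Reachable x z then g x + g y + h s(x, y) else 0, ?_⟩
      have key : ∀ a b : ZMod 2, a + a = 0 ∧ b + b = 0 := by decide
      intro a b hab
      by_cases hs : s(a, b) = s(x, y)
      · have k : ∀ p q r : ZMod 2, p + (p + q + r) + (q + 0) = r ∧
          q + 0 + (p + (p + q + r)) = r := by decide
        rw [hs]
        rcases Sym2.eq_iff.mp hs with ⟨rfl, rfl⟩ | ⟨rfl, rfl⟩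
        · simp only [Reachable.refl, if_true, hbr, if_false]
          exact (k _ _ _).1
        · simp only [Reachable.refl, if_true, hbr, if_false]
          exact (k _ _ _).2
      · have hab' : F'.Adj a b := by
          simp only [hF', deleteEdges_adj, Set.mem_singleton_iff]
          exact ⟨hab, hs⟩
        have hr : F'.Reachable x a ↔ F'.Reachable x b :=
          ⟨fun q => q.trans hab'.reachable, fun q => q.trans hab'.reachable.symm⟩
        rw [← hg a b hab']
        have k : ∀ p q r : ZMod 2, p + r + (q + r) = p + q := by decide
        simp only [hr]
        exact k _ _ _
    · exact ⟨0, fun x y hxy => (hE ⟨x, y, hxy⟩).elim⟩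

theorem aux_walk {V : Type*} [Fintype V] [DecidableEq V] (S : SimpleGraph V)
    [DecidableRel S.Adj] {a b : V} (p : S.Walk a b) : ∃ h : Sym2 V → ZMod 2,
    ∀ x, ∑ e ∈ S.incidenceFinset x, h e = (Pi.single a 1 : V → ZMod 2) x + (Pi.single b 1 : V → ZMod 2) x := by
  induction p with
  | nil =>
    refine ⟨0, fun x => ?_⟩
    have k : ∀ p : ZMod 2, 0 = p + p := by decide
    simpa using k _
  | @cons a b c hab p ih =>
    obtain ⟨h, hh⟩ := ih
    refine ⟨h + Pi.single s(a, b) 1, fun x => ?_⟩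
    simp only [Pi.add_apply, Finset.sum_add_distrib, hh]
    have h1 : ∑ e ∈ S.incidenceFinset x, (Pi.single s(a, b) 1 : Sym2 V → ZMod 2) e =
        (Pi.single a 1 : V → ZMod 2) x + (Pi.single b 1 : V → ZMod 2) x := by
      rw [Finset.sum_pi_single']
      simp only [mem_incidenceFinset, mk'_mem_incidenceSet_iff, hab, true_and, Pi.single_apply]
      have := hab.ne
      by_cases h2 : x = a <;> by_cases h3 : x = b <;> simp_all
    rw [h1]
    have k : ∀ p q r : ZMod 2, p + q + (r + p) = r + q := by decide
    exact k _ _ _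

theorem aux_join {V : Type*} [Fintype V] [DecidableEq V] (S : SimpleGraph V)
    [DecidableRel S.Adj] (hS : S.Connected) (τ : V → ZMod 2) (hτ : ∑ x, τ x = 0) :
    ∃ h : Sym2 V → ZMod 2, ∀ x, ∑ e ∈ S.incidenceFinset x, h e = τ x := by
  obtain ⟨r⟩ := hS.nonempty
  have : ∀ t, ∃ h : Sym2 V → ZMod 2,
    ∀ x, ∑ e ∈ S.incidenceFinset x, h e = (Pi.single r 1 : V → ZMod 2) x + (Pi.single t 1 : V → ZMod 2) x := fun t =>
      aux_walk S (hS.preconnected r t).some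
  choose h hh using this
  refine ⟨fun e => ∑ t, τ t * h t e, fun x => ?_⟩
  rw [Finset.sum_comm]
  simp only [← Finset.mul_sum, hh, mul_add, Finset.sum_add_distrib]
  rw [← Finset.sum_mul, hτ]
  simp [Pi.single_apply]

theorem aux_forest {V : Type*} [Fintype V] [DecidableEq V] (F : SimpleGraph V)
    [DecidableRel F.Adj] (hF : F.IsAcyclic) : ∃ f : Sym2 V → ZMod 2, ∀ x i,
    ((F.incidenceFinset x).filter (fun e => f e = i)).card = 0 ∨
    Odd ((F.incidenceFinset x).filter (fun e => f e = i)).card := by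
  have hd : ∀ x, ∃ d : Sym2 V, (F.incidenceFinset x).Nonempty → d ∈ F.incidenceFinset x := by
    intro x
    by_cases hx : (F.incidenceFinset x).Nonempty
    · exact ⟨hx.choose, fun _ => hx.choose_spec⟩
    · exact ⟨s(x, x), fun q => (hx q).elim⟩
  choose d hd using hd
  let φ : V → Sym2 V → ZMod 2 := fun x e =>
    if Even (F.incidenceFinset x).card ∧ e = d x then 1 else 0
  obtain ⟨g, hg⟩ := aux_coboundary
    (Sym2.lift ⟨fun x y => φ x s(x, y) + φ y s(x, y), fun x y => by
      dsimp only; rw [Sym2.eq_swap (a := x), add_comm]⟩) F hF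
  simp only [Sym2.lift_mk] at hg
  have hf : ∀ e : Sym2 V, ∃ c : ZMod 2, ∀ x, e ∈ F.incidenceFinset x → c = g x + φ x e := by
    intro e
    induction e with
    | _ a b =>
      refine ⟨g a + φ a s(a, b), fun x hx => ?_⟩
      rw [mem_incidenceFinset, mk'_mem_incidenceSet_iff] at hx
      obtain ⟨hab, rfl | rfl⟩ := hx
      · rfl
      · have := hg _ _ hab
        have k : ∀ p q r s : ZMod 2, p + q = r + s → p + r = q + s := by decide
        exact k _ _ _ _ this
  choose f hf using hf
  refine ⟨f, fun x i => ?_⟩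
  have hfx := fun e => hf e x
  by_cases hev : Even (F.incidenceFinset x).card
  · rcases (F.incidenceFinset x).eq_empty_or_nonempty with h0 | hne
    · left; simp [h0]
    · right
      have hdx := hd x hne
      by_cases hi : i = g x
      · have : (F.incidenceFinset x).filter (fun e => f e = i) = (F.incidenceFinset x).erase (d x) := by
          ext e
          simp only [Finset.mem_filter, Finset.mem_erase]
          constructor
          · rintro ⟨h1, h2⟩
            refine ⟨?_, h1⟩
            rintro rfl
            rw [hfx _ h1, hi] at h2
            simp only [φ, hev, true_and, false_and, if_true, if_false, add_zero] at h2
            simp at h2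
          · rintro ⟨h1, h2⟩
            refine ⟨h2, ?_⟩
            rw [hfx _ h2, hi]
            simp [φ, h1]
        rw [this, Finset.card_erase_of_mem hdx]
        have := Finset.card_pos.mpr hne
        exact Nat.Even.sub_odd this hev odd_one
      · have hi' : i = g x + 1 := by
          have k : ∀ p q : ZMod 2, p ≠ q → p = q + 1 := by decide
          exact k _ _ hi
        have : (F.incidenceFinset x).filter (fun e => f e = i) = {d x} := by
          ext e
          simp only [Finset.mem_filter, Finset.mem_singleton]
          constructor
          · rintro ⟨h1, h2⟩
            by_contra h3
            rw [hfx _ h1, hi'] at h2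
            simp [φ, h3] at h2
          · rintro rfl
            refine ⟨hdx, ?_⟩
            rw [hfx _ hdx, hi']
            simp only [φ, hev, true_and, false_and, if_true, if_false, add_zero]
        rw [this]; simp
  · have hfx' : ∀ e ∈ F.incidenceFinset x, f e = g x := fun e he => by
      rw [hfx e he]; simp only [φ, hev, true_and, false_and, if_true, if_false, add_zero]
    by_cases hi : g x = i
    · right
      rw [Finset.filter_true_of_mem (fun e he => (hfx' e he).trans hi)]
      exact Nat.not_even_iff_odd.mp hev
    · left
      rw [Finset.filter_false_of_mem (fun e he => by rw [hfx' e he]; exact hi)]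
      rfl

theorem aux_main {V : Type*} [Fintype V] [DecidableEq V] (G : SimpleGraph V)
    [DecidableRel G.Adj] (hG : G.Connected) (c : V → ZMod 2) (hc : ∑ x, c x = 0) :
    ∃ f : Sym2 V → Fin 4, (∀ e, f e ≠ 3) ∧ ∀ x,
      (colorCount G f x 0 = 0 ∨ Odd (colorCount G f x 0)) ∧
      (colorCount G f x 1 = 0 ∨ Odd (colorCount G f x 1)) ∧
      ((colorCount G f x 2 : ℕ) : ZMod 2) = c x := by
  classical
  obtain ⟨S, hSG, hS⟩ := hG.exists_isTree_le
  have hdeg : ∑ x, ((G.degree x : ℕ) : ZMod 2) = 0 := by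
    rw [← Nat.cast_sum, sum_degrees_eq_twice_card_edges, Nat.cast_mul]
    have : ((2 : ℕ) : ZMod 2) = 0 := by decide
    rw [this, zero_mul]
  obtain ⟨h, hh⟩ := aux_join S hS.1 (fun x => (G.degree x : ZMod 2) + c x) (by
    rw [Finset.sum_add_distrib, hdeg, hc, add_zero])
  let F : SimpleGraph V := fromEdgeSet {e | e ∈ S.edgeSet ∧ h e = 1}
  have hFS : F ≤ S := by
    intro a b hab
    exact (fromEdgeSet_adj _ |>.mp hab).1.1
  have hFe : ∀ e, e ∈ F.edgeSet ↔ e ∈ S.edgeSet ∧ h e = 1 := by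
    intro e
    simp only [F, edgeSet_fromEdgeSet, Set.mem_sdiff, Set.mem_ofPred_eq]
    exact ⟨fun q => q.1, fun q => ⟨q, S.not_isDiag_of_mem_edgeSet q.1⟩⟩
  obtain ⟨f, hf⟩ := aux_forest F (hS.2.anti hFS)
  have hFi : ∀ x, F.incidenceFinset x = (S.incidenceFinset x).filter (fun e => h e = 1) := by
    intro x; ext e
    simp only [mem_incidenceFinset, Finset.mem_filter, incidenceSet, Set.mem_ofPred_eq, hFe]
    tauto
  have hFG : ∀ x, F.incidenceFinset x ⊆ G.incidenceFinset x := by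
    intro x e
    simp only [mem_incidenceFinset]
    exact fun q => ⟨edgeSet_mono (hFS.trans hSG) q.1, q.2⟩
  have hmem : ∀ x e, e ∈ G.incidenceFinset x → (e ∈ F.incidenceFinset x ↔ e ∈ F.edgeSet) := by
    intro x e he
    rw [mem_incidenceFinset] at he ⊢
    exact ⟨fun q => q.1, fun q => ⟨q, he.2⟩⟩
  have hcardF : ∀ x, ((F.incidenceFinset x).card : ZMod 2) = (G.degree x : ZMod 2) + c x := by
    intro x
    rw [← hh x, hFi, Finset.card_filter, Nat.cast_sum]
    refine Finset.sum_congr rfl fun e _ => ?_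
    have k : ∀ p : ZMod 2, ((if p = 1 then 1 else 0 : ℕ) : ZMod 2) = p := by decide
    exact k _
  let f' : Sym2 V → Fin 4 := fun e => if e ∈ F.edgeSet then (if f e = 0 then 0 else 1) else 2
  have k1 : ∀ p : ZMod 2, p ≠ 0 ↔ p = 1 := by decide
  have e0 : ∀ x, colorCount G f' x 0 = ((F.incidenceFinset x).filter (fun e => f e = 0)).card := by
    intro x
    unfold colorCount
    congr 1; ext e
    simp only [Finset.mem_filter]
    constructor
    · rintro ⟨h1, h2⟩
      by_cases h3 : e ∈ F.edgeSet <;> by_cases h4 : f e = 0 <;> simp [f', h3, h4] at h2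
      exact ⟨(hmem x e h1).2 h3, h4⟩
    · rintro ⟨h1, h2⟩
      have := (hmem x e (hFG x h1)).1 h1
      exact ⟨hFG x h1, by simp [f', this, h2]⟩
  have e1 : ∀ x, colorCount G f' x 1 = ((F.incidenceFinset x).filter (fun e => f e = 1)).card := by
    intro x
    unfold colorCount
    congr 1; ext e
    simp only [Finset.mem_filter]
    constructor
    · rintro ⟨h1, h2⟩
      by_cases h3 : e ∈ F.edgeSet <;> by_cases h4 : f e = 0 <;> simp [f', h3, h4] at h2
      exact ⟨(hmem x e h1).2 h3, (k1 _).1 h4⟩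
    · rintro ⟨h1, h2⟩
      have := (hmem x e (hFG x h1)).1 h1
      exact ⟨hFG x h1, by simp [f', this, h2]⟩
  have e2 : ∀ x, colorCount G f' x 2 = (G.incidenceFinset x \ F.incidenceFinset x).card := by
    intro x
    unfold colorCount
    congr 1; ext e
    simp only [Finset.mem_filter, Finset.mem_sdiff]
    refine and_congr_right fun h1 => ?_
    rw [hmem x e h1]
    by_cases h3 : e ∈ F.edgeSet <;> by_cases h4 : f e = 0 <;> simp [f', h3, h4]
  refine ⟨f', ?_, fun x => ⟨?_, ?_, ?_⟩⟩
  · intro e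
    by_cases h3 : e ∈ F.edgeSet <;> by_cases h4 : f e = 0 <;> simp [f', h3, h4]
  · rw [e0]; exact hf x 0
  · rw [e1]; exact hf x 1
  · rw [e2]
    have := Finset.card_sdiff_add_card_eq_card (hFG x)
    have h2 := congrArg (Nat.cast : ℕ → ZMod 2) this
    rw [Nat.cast_add, hcardF, card_incidenceFinset_eq_degree] at h2
    have k : ∀ p q r : ZMod 2, p + (q + r) = q → p = r := by decide
    exact k _ _ _ h2

theorem odd_four_coloring_with_singleton_class (G : SimpleGraph V) [DecidableRel G.Adj]
    (hG : G.Connected) (hsub : ∀ v : V, Odd (G.degree v) ∨ G.degree v = 2)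
    (v : V) (hv : G.degree v = 2) (hint : (G.induce ({v}ᶜ : Set V)).Connected)
    (e : Sym2 V) (he : e ∈ G.incidenceSet v) :
    ∃ f : Sym2 V → Fin 4, IsOddColoring G f ∧
      ∀ e' ∈ G.edgeSet, f e' = 3 → e' = e := by
  have odd_of : ∀ n : ℕ, (n : ZMod 2) = 1 → Odd n := fun n hn => by
    rwa [ZMod.natCast_eq_one_iff_odd] at hn
  by_cases hV : Even (Fintype.card V)
  · obtain ⟨f, hf3, hf⟩ := aux_main G hG (fun _ => 1) (by
      simpa using (ZMod.natCast_eq_zero_iff_even).2 hV)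
    refine ⟨f, fun x i => ?_, fun e' _ h3 => (hf3 e' h3).elim⟩
    obtain ⟨h0, h1, h2⟩ := hf x
    fin_cases i
    · exact h0
    · exact h1
    · exact Or.inr (odd_of _ h2)
    · left
      simp [colorCount, hf3]
  · classical
    have hVo := (ZMod.natCast_eq_one_iff_odd).2 (Nat.not_even_iff_odd.mp hV)
    let G1 := G.deleteEdges {e}
    have hinc : ∀ x, G1.incidenceFinset x = (G.incidenceFinset x).erase e := by
      intro x; ext e'
      simp only [mem_incidenceFinset, Finset.mem_erase, incidenceSet, Set.mem_ofPred_eq, G1,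
        edgeSet_deleteEdges, Set.mem_sdiff, Set.mem_singleton_iff]
      tauto
    have hev : e ∈ G.incidenceFinset v := by rwa [mem_incidenceFinset]
    have hc1 : (G1.incidenceFinset v).card = 1 := by
      rw [hinc, Finset.card_erase_of_mem hev, card_incidenceFinset_eq_degree, hv]
    have hvw : ∃ w, G1.Adj v w := by
      rw [card_incidenceFinset_eq_degree] at hc1
      exact (G1.degree_pos_iff_exists_adj v).1 (by omega)
    obtain ⟨w, hvw⟩ := hvw
    have hreach : ∀ x y, x ≠ v → y ≠ v → G1.Reachable x y := by
      intro x y hx hy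
      let φ : G.induce ({v}ᶜ : Set V) →g G1 :=
        { toFun := Subtype.val
          map_rel' := by
            intro a b hab
            simp only [G1, deleteEdges_adj, Set.mem_singleton_iff]
            refine ⟨hab, fun hh => ?_⟩
            have h2 := he.2
            rw [← hh, Sym2.mem_iff] at h2
            rcases h2 with h2 | h2
            · exact a.2 h2.symm
            · exact b.2 h2.symm }
      exact (hint.preconnected ⟨x, hx⟩ ⟨y, hy⟩).map φ
    have hw : ∀ x, G1.Reachable w x := by
      intro x
      by_cases hx : x = v
      · subst hx; exact hvw.reachable.symm
      · exact hreach w x hvw.ne.symm hx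
    have hG1 : G1.Connected := 
      { preconnected := fun x y => (hw x).symm.trans (hw y)
        nonempty := ⟨v⟩ }
    obtain ⟨f, hf3, hf⟩ := aux_main G1 hG1 (fun x => 1 + (Pi.single v 1 : V → ZMod 2) x) (by
      rw [Finset.sum_add_distrib]
      simp [Finset.sum_pi_single', hVo]
      decide)
    have hcol : ∀ x i, i ≠ 3 → colorCount G (Function.update f e 3) x i = colorCount G1 f x i := by
      intro x i hi
      unfold colorCount
      congr 1; ext e'
      simp only [hinc, Finset.mem_filter, Finset.mem_erase]
      by_cases h : e' = e
      · subst h; simp [hi.symm]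
      · simp [h]
    refine ⟨Function.update f e 3, fun x i => ?_, fun e' _ h3 => ?_⟩
    · obtain ⟨h0, h1, h2⟩ := hf x
      by_cases hi3 : i = 3
      · subst hi3
        have : (G.incidenceFinset x).filter (fun e' => Function.update f e 3 e' = 3) ⊆ {e} := by
          intro e' h'
          rw [Finset.mem_singleton]
          by_contra hne
          have := (Finset.mem_filter.1 h').2
          rw [Function.update_of_ne hne] at this
          exact hf3 _ this
        have := Finset.card_le_card this
        rw [Finset.card_singleton] at this
        unfold colorCount
        rcases Nat.le_one_iff_eq_zero_or_eq_one.1 this with h | h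
        · left; exact h
        · right; rw [h]; exact odd_one
      · rw [hcol x i hi3]
        fin_cases i
        · exact h0
        · exact h1
        · by_cases hx : x = v
          · subst hx
            left
            have hle : colorCount G1 f x 2 ≤ 1 := by
              rw [← hc1]; exact Finset.card_filter_le _ _
            rcases Nat.le_one_iff_eq_zero_or_eq_one.1 hle with h | h
            · exact h
            · rw [h] at h2
              simp at h2
          · right
            apply odd_of
            simpa [hx] using h2
        · exact (hi3 rfl).elim
    · by_contra hne
      rw [Function.update_of_ne hne] at h3
      exact hf3 _ h3
end

section
/- Let G be a subdivision of an odd graph. Then χ'_o(G) ≤ 2 if and only if for every cycle C of G, the number of vertices on C having degree 2 in G is even. -/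
open SimpleGraph Finset

variable {V : Type*} [Fintype V] [DecidableEq V]

/-- Sum of a weight along a walk. -/
def wsum {V : Type*} {G : SimpleGraph V} (t : V → V → ZMod 2) {u v : V} : G.Walk u v → ZMod 2
  | .nil => 0
  | .cons (u := a) (v := b) _ p => t a b + wsum t p

theorem zmod2_add_self (a : ZMod 2) : a + a = 0 := CharTwo.add_self_eq_zero a

theorem wsum_mapLe {V : Type*} {G H : SimpleGraph V} (h : H ≤ G) (t : V → V → ZMod 2) {u v : V}
    (p : H.Walk u v) : wsum t (p.mapLe h) = wsum t p := by
  induction p with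
  | nil => rfl
  | cons e p ih =>
    have : wsum t ((Walk.cons e p).mapLe h) = t _ _ + wsum t (p.mapLe h) := rfl
    rw [this, ih]; rfl

theorem wsum_pot {V : Type*} {H : SimpleGraph V} (t : V → V → ZMod 2) (y : V → ZMod 2)
    (hy : ∀ u v, H.Adj u v → y u + y v = t u v) {u v : V}
    (p : H.Walk u v) : wsum t p = y u + y v := by
  induction p with
  | nil => simp [wsum, zmod2_add_self]
  | @cons a b c e p ih =>
    simp only [wsum]
    rw [ih, ← hy _ _ e]
    linear_combination zmod2_add_self (y b)

theorem exists_pot {V : Type*} [Finite V] (G : SimpleGraph V) (t : V → V → ZMod 2)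
    (ts : ∀ u v, t u v = t v u)
    (hc : ∀ (x : V) (C : G.Walk x x), C.IsCycle → wsum t C = 0) :
    ∃ y : V → ZMod 2, ∀ u v, G.Adj u v → y u + y v = t u v := by
  classical
  let S : Set (SimpleGraph V) :=
    {H | H ≤ G ∧ ∃ y : V → ZMod 2, ∀ u v, H.Adj u v → y u + y v = t u v}
  have hne : S.Nonempty := ⟨⊥, bot_le, 0, by simp⟩
  obtain ⟨H, hH⟩ := (Set.toFinite S).exists_maximal hne
  obtain ⟨hHG, y, hy⟩ := hH.prop
  by_cases hEq : ∀ u v, G.Adj u v → H.Adj u v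
  · exact ⟨y, fun u v h => hy u v (hEq u v h)⟩
  exfalso
  push Not at hEq
  obtain ⟨u, v, hG, hN⟩ := hEq
  have key : ∃ z : V → ZMod 2, (∀ a b, H.Adj a b → z a + z b = t a b) ∧ z u + z v = t u v := by
    by_cases hr : H.Reachable v u
    · refine ⟨y, hy, ?_⟩
      obtain ⟨p, hp⟩ := hr.exists_isPath
      have hcy : (Walk.cons hG (p.mapLe hHG)).IsCycle := by
        rw [Walk.cons_isCycle_iff]
        refine ⟨hp.mapLe hHG, ?_⟩
        rw [Walk.edges_mapLe_eq_edges]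
        intro hm
        exact hN (p.adj_of_mem_edges hm)
      have h0 := hc _ _ hcy
      simp only [wsum] at h0
      rw [wsum_mapLe, wsum_pot t y hy] at h0
      linear_combination -h0 + zmod2_add_self (y u) + zmod2_add_self (y v)
    · refine ⟨fun w => y w + if H.Reachable v w then (y u + y v + t u v) else 0, ?_, ?_⟩
      · intro a b hab
        have : H.Reachable v a ↔ H.Reachable v b :=
          ⟨fun h => h.trans hab.reachable, fun h => h.trans hab.symm.reachable⟩
        simp only [this]
        rw [← hy a b hab]
        linear_combination zmod2_add_self (if H.Reachable v b then (y u + y v + t u v) else 0)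
      · simp only [hr, if_false, Reachable.refl, if_true]
        linear_combination zmod2_add_self (y u) + zmod2_add_self (y v)
  obtain ⟨z, hz, hzuv⟩ := key
  have hmem : H ⊔ edge u v ∈ S := by
    refine ⟨sup_le hHG ?_, z, ?_⟩
    · intro a b hab
      rw [edge_adj] at hab
      rcases hab.1 with ⟨rfl, rfl⟩ | ⟨rfl, rfl⟩
      · exact hG
      · exact hG.symm
    · intro a b hab
      rcases hab with hab | hab
      · exact hz a b hab
      · rw [edge_adj] at hab
        rcases hab.1 with ⟨rfl, rfl⟩ | ⟨rfl, rfl⟩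
        · exact hzuv
        · rw [add_comm, ts]; exact hzuv
  have := hH.le_of_ge hmem le_sup_left
  exact hN (this (Or.inr (by rw [edge_adj]; exact ⟨Or.inl ⟨rfl, rfl⟩, hG.ne⟩)))

theorem wsum_trail {V : Type*} {G : SimpleGraph V} (s : V → Sym2 V → ZMod 2) (δ : V → ZMod 2)
    (hs : ∀ v, ∀ e ∈ G.incidenceSet v, ∀ e' ∈ G.incidenceSet v, e ≠ e' → s v e + s v e' = δ v)
    {v w : V} (p : G.Walk v w) (hp : p.IsTrail) (e0 : Sym2 V) (h0 : e0 ∈ G.incidenceSet v)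
    (hn : e0 ∉ p.edges) :
    ∃ e1, e1 ∈ G.incidenceSet w ∧ ((p.Nil ∧ e1 = e0) ∨ e1 ∈ p.edges) ∧
      s v e0 + s w e1 + wsum (fun a b => s a s(a,b) + s b s(a,b)) p + δ w
        = (p.support.map δ).sum := by
  induction p generalizing e0 with
  | nil => exact ⟨e0, h0, Or.inl ⟨Walk.Nil.nil, rfl⟩, by simp [wsum, zmod2_add_self]⟩
  | @cons a b c h p ih =>
    rw [Walk.isTrail_cons] at hp
    obtain ⟨e1, h1, h2, h3⟩ := ih hp.1 s(a,b) ⟨h, by simp⟩ hp.2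
    refine ⟨e1, h1, Or.inr ?_, ?_⟩
    · rw [Walk.edges_cons]
      rcases h2 with h2 | h2
      · simp [h2.2]
      · simp [h2]
    · rw [Walk.edges_cons, List.mem_cons, not_or] at hn
      have := hs a e0 h0 s(a,b) ⟨h, by simp⟩ hn.1
      simp only [wsum, Walk.support_cons, List.map_cons, List.sum_cons]
      rw [← h3, ← this]
      ring

theorem wsum_cycle {V : Type*} {G : SimpleGraph V} (s : V → Sym2 V → ZMod 2) (δ : V → ZMod 2)
    (hs : ∀ v, ∀ e ∈ G.incidenceSet v, ∀ e' ∈ G.incidenceSet v, e ≠ e' → s v e + s v e' = δ v)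
    {x : V} (C : G.Walk x x) (hC : C.IsCycle) :
    wsum (fun a b => s a s(a,b) + s b s(a,b)) C = (C.support.tail.map δ).sum := by
  cases C with
  | nil => exact absurd hC Walk.not_isCycle_nil
  | @cons _ b _ h p =>
    rw [Walk.cons_isCycle_iff] at hC
    obtain ⟨e1, h1, h2, h3⟩ := wsum_trail s δ hs p hC.1.isTrail s(x,b) ⟨h, by simp⟩ hC.2
    have h4 : e1 ∈ p.edges := by
      rcases h2 with h2 | h2
      · exact absurd h2.1.eq h.ne'
      · exact h2
    have := hs x s(x,b) ⟨h, by simp⟩ e1 h1 (by rintro rfl; exact hC.2 h4)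
    simp only [wsum, Walk.support_cons, List.tail_cons]
    rw [← h3, ← this]
    linear_combination -zmod2_add_self (s x e1)

theorem wsum_cycle_card {V : Type*} [Fintype V] [DecidableEq V] (G : SimpleGraph V)
    [DecidableRel G.Adj] (s : V → Sym2 V → ZMod 2)
    (hs : ∀ v, ∀ e ∈ G.incidenceSet v, ∀ e' ∈ G.incidenceSet v, e ≠ e' →
      s v e + s v e' = if G.degree v = 2 then 1 else 0)
    {x : V} (C : G.Walk x x) (hC : C.IsCycle) :
    wsum (fun a b => s a s(a,b) + s b s(a,b)) C =
      ((C.support.toFinset.filter (fun w => G.degree w = 2)).card : ZMod 2) := by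
  rw [wsum_cycle s _ hs C hC, ← List.sum_toFinset _ hC.support_nodup, Finset.sum_boole]
  congr 3
  ext w
  simp only [List.mem_toFinset]
  constructor
  · exact List.mem_of_mem_tail
  · intro hw
    rw [Walk.mem_support_iff] at hw
    rcases hw with rfl | hw
    · exact Walk.end_mem_tail_support hC.not_nil
    · exact hw

theorem oddAt_iff {V : Type*} [Fintype V] [DecidableEq V] (G : SimpleGraph V)
    [DecidableRel G.Adj] (f : Sym2 V → Fin 2) (v : V)
    (hv : Odd (G.degree v) ∨ G.degree v = 2) :
    OddAt G f v ↔ ∀ e ∈ G.incidenceSet v, ∀ e' ∈ G.incidenceSet v, e ≠ e' →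
      (show ZMod 2 from f e) + (show ZMod 2 from f e') = if G.degree v = 2 then 1 else 0 := by
  have hsum : colorCount G f v 0 + colorCount G f v 1 = G.degree v := by
    rw [← G.card_incidenceFinset_eq_degree, colorCount, colorCount,
      ← Finset.card_filter_add_card_filter_not (s := G.incidenceFinset v) (fun e => f e = 0)]
    congr 2
    ext e
    simp only [Finset.mem_filter]
    have : ∀ a : Fin 2, a = 1 ↔ ¬ a = 0 := by decide
    rw [this]
  have tw : ∀ a b : Fin 2, ((show ZMod 2 from a) + (show ZMod 2 from b) = 1 ↔ a ≠ b) := by decide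
  have tw0 : ∀ a b : Fin 2, ((show ZMod 2 from a) + (show ZMod 2 from b) = 0 ↔ a = b) := by decide
  have mi : ∀ e, e ∈ G.incidenceSet v ↔ e ∈ G.incidenceFinset v := by simp
  have f2 : ∀ a : Fin 2, a = 0 ∨ a = 1 := by decide
  rw [OddAt, Fin.forall_fin_two]
  by_cases h2 : G.degree v = 2
  · simp only [h2, if_true]
    rw [h2] at hsum
    constructor
    · rintro ⟨h0, h1⟩ e he e' he' hne
      rw [tw]
      intro hf
      have hlt : 1 < colorCount G f v (f e) := by
        rw [colorCount, Finset.one_lt_card]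
        exact ⟨e, by simp [← mi, he], e', by simp [← mi, he', hf], hne⟩
      rcases f2 (f e) with h | h <;> rw [h] at hlt <;> grind
    · intro h
      have hc : (G.incidenceFinset v).card = 2 := by rw [G.card_incidenceFinset_eq_degree, h2]
      obtain ⟨e, e', hne, heq⟩ := Finset.card_eq_two.1 hc
      have := h e (by simp [mi, heq]) e' (by simp [mi, heq]) hne
      rw [tw] at this
      have p : ∀ i, 0 < colorCount G f v i := by
        intro i
        rw [colorCount, Finset.card_pos]
        have : f e = i ∨ f e' = i := by grind
        rcases this with h | h
        · exact ⟨e, by simp [heq, h]⟩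
        · exact ⟨e', by simp [heq, h]⟩
      have p0 := p 0
      have p1 := p 1
      have q0 : colorCount G f v 0 = 1 := by omega
      have q1 : colorCount G f v 1 = 1 := by omega
      simp [q0, q1]
  · simp only [h2, if_false]
    have ho : Odd (G.degree v) := by tauto
    constructor
    · rintro ⟨h0, h1⟩ e he e' he' hne
      rw [tw0]
      by_contra hf
      have p : ∀ i, 0 < colorCount G f v i := by
        intro i
        rw [colorCount, Finset.card_pos]
        have : f e = i ∨ f e' = i := by grind
        rcases this with h | h
        · exact ⟨e, by simp [← mi, he, h]⟩
        · exact ⟨e', by simp [← mi, he', h]⟩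
      have p0 := p 0
      have p1 := p 1
      grind
    · intro h
      have z : colorCount G f v 0 = 0 ∨ colorCount G f v 1 = 0 := by
        by_contra hcon
        push Not at hcon
        obtain ⟨h0, h1⟩ := hcon
        rw [colorCount, ← Nat.pos_iff_ne_zero, Finset.card_pos] at h0 h1
        obtain ⟨e, he⟩ := h0
        obtain ⟨e', he'⟩ := h1
        rw [Finset.mem_filter, ← mi] at he he'
        have hne : e ≠ e' := by
          rintro rfl
          have := he.2.symm.trans he'.2
          exact absurd this (by decide)
        have := (tw0 _ _).1 (h e he.1 e' he'.1 hne)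
        rw [he.2, he'.2] at this
        exact absurd this (by decide)
      grind

theorem le_two_iff {V : Type*} [Fintype V] [DecidableEq V] (G : SimpleGraph V)
    [DecidableRel G.Adj] :
    oddChromIndex G ≤ 2 ↔ ∃ f : Sym2 V → Fin 2, IsOddColoring G f := by
  constructor
  · intro h
    have hne : {k | ∃ f : Sym2 V → Fin k, IsOddColoring G f}.Nonempty := by
      refine ⟨Fintype.card (Sym2 V), Fintype.equivFin _, ?_⟩
      intro v i
      have : colorCount G (Fintype.equivFin (Sym2 V)) v i ≤ 1 := by
        rw [colorCount, Finset.card_le_one]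
        intro a ha b hb
        rw [Finset.mem_filter] at ha hb
        exact (Fintype.equivFin _).injective (ha.2.trans hb.2.symm)
      rcases Nat.le_one_iff_eq_zero_or_eq_one.1 this with h | h <;> simp [h]
    obtain ⟨k, h, f, hf⟩ : ∃ k, k ≤ 2 ∧ ∃ f : Sym2 V → Fin k, IsOddColoring G f :=
      ⟨_, h, Nat.sInf_mem hne⟩
    refine ⟨fun e => Fin.castLE h (f e), ?_⟩
    intro v i
    by_cases hi : ∃ j, Fin.castLE h j = i
    · obtain ⟨j, rfl⟩ := hi
      have := hf v j
      have e : colorCount G (fun e => Fin.castLE h (f e)) v (Fin.castLE h j)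
          = colorCount G f v j := by
        unfold colorCount
        congr 1
        apply Finset.filter_congr
        intro x _
        exact (Fin.castLE_injective h).eq_iff
      rw [e]
      exact this
    · left
      rw [colorCount, Finset.card_eq_zero, Finset.filter_eq_empty_iff]
      intro e _ he
      exact hi ⟨_, he⟩
  · rintro h
    exact Nat.sInf_le h

theorem subdivision_odd_two_colorable_iff (G : SimpleGraph V) [DecidableRel G.Adj]
    (hsub : ∀ v : V, Odd (G.degree v) ∨ G.degree v = 2) :
    oddChromIndex G ≤ 2 ↔
      ∀ (x : V) (C : G.Walk x x), C.IsCycle →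
        Even ((C.support.toFinset.filter (fun w => G.degree w = 2)).card) := by
  rw [le_two_iff]
  constructor
  · rintro ⟨f, hf⟩ x C hC
    have := wsum_cycle_card G (fun _ e => (show ZMod 2 from f e))
      (fun v => (oddAt_iff G f v (hsub v)).1 (hf v)) C hC
    rw [← ZMod.natCast_eq_zero_iff_even, ← this]
    have := wsum_pot (H := G) (fun a b => (show ZMod 2 from f s(a,b)) + (show ZMod 2 from f s(a,b)))
      0 (fun u v _ => (add_zero (0 : ZMod 2)).trans (zmod2_add_self (f s(u,v))).symm) C
    simpa using this
  · intro h
    have hex : ∀ v, ∃ e, e ∈ G.incidenceFinset v := by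
      intro v
      have : 0 < (G.incidenceFinset v).card := by
        rw [G.card_incidenceFinset_eq_degree]
        rcases hsub v with h | h
        · exact h.pos
        · omega
      exact Finset.card_pos.1 this
    choose e0 he0 using hex
    let s : V → Sym2 V → ZMod 2 := fun v e => if G.degree v = 2 ∧ e = e0 v then 1 else 0
    have hs : ∀ v, ∀ e ∈ G.incidenceSet v, ∀ e' ∈ G.incidenceSet v, e ≠ e' →
        s v e + s v e' = if G.degree v = 2 then 1 else 0 := by
      intro v e he e' he' hne
      by_cases h2 : G.degree v = 2
      · have hc : (G.incidenceFinset v).card = 2 := by rw [G.card_incidenceFinset_eq_degree, h2]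
        obtain ⟨a, b, hab, heq⟩ := Finset.card_eq_two.1 hc
        have k0 := he0 v
        rw [← mem_incidenceFinset, heq] at he he'
        rw [heq] at k0
        simp only [Finset.mem_insert, Finset.mem_singleton] at he he' k0
        simp only [s, h2, true_and, if_true]
        grind
      · simp [s, h2]
    obtain ⟨y, hy⟩ := exists_pot G (fun a b => s a s(a,b) + s b s(a,b))
      (fun u v => by rw [Sym2.eq_swap, add_comm]) (fun x C hC => by
        rw [wsum_cycle_card G s hs C hC, ZMod.natCast_eq_zero_iff_even]
        exact h x C hC)
    have hx : ∀ e : Sym2 V, ∃ c : ZMod 2, ∀ v, e ∈ G.incidenceSet v → c = y v + s v e := by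
      intro e
      induction e with | _ a b
      refine ⟨y a + s a s(a,b), ?_⟩
      intro v hv
      have hadj : G.Adj a b := hv.1
      have hm := hv.2
      rw [Sym2.mem_iff] at hm
      rcases hm with rfl | rfl
      · rfl
      · have := hy _ _ hadj
        linear_combination this + zmod2_add_self (s a s(a,v)) - zmod2_add_self (y v)
    choose f hf using hx
    refine ⟨f, fun v => (oddAt_iff G f v (hsub v)).2 ?_⟩
    intro e he e' he' hne
    rw [← hs v e he e' he' hne]
    change f e + f e' = _
    rw [hf e v he, hf e' v he']
    linear_combination zmod2_add_self (y v)
end
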